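/- For all integers d ≥ 1 and r ≥ 0, the number of reduced words of w^{(d,r)} equals the number of standard Young tableaux of shifted shape Z(d,r): |Red(w^{(d,r)})| = |SYT(Z(d,r))|. -/

import Mathlib

open scoped BigOperators

namespace BST

/-- `lam` (1-indexed, with `d` parts) is a strict partition: strictly decreasing
positive parts `lam 1 > lam 2 > ⋯ > lam d > 0`. -/
def IsStrictPartition (d : ℕ) (lam : ℕ → ℕ) : Prop :=
  (∀ i : ℕ, 1 ≤ i → i < d → lam (i + 1) < lam i) ∧ 1 ≤ lam d

/-- The size `|λ| = λ_1 + ⋯ + λ_d`. -/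
def sizeP (d : ℕ) (lam : ℕ → ℕ) : ℕ := ∑ i ∈ Finset.Icc 1 d, lam i

/-- The shifted diagram `D(λ) ⊆ ℤ × ℤ`: row `i` (1 ≤ i ≤ d) occupies columns
`i - d, …, λ_i + i - d - 1`. -/
def Diagram (d : ℕ) (lam : ℕ → ℕ) : Set (ℤ × ℤ) :=
  {p : ℤ × ℤ | 1 ≤ p.1 ∧ p.1 ≤ (d : ℤ) ∧ p.1 - (d : ℤ) ≤ p.2 ∧
    p.2 + (d : ℤ) + 1 ≤ (lam p.1.toNat : ℤ) + p.1}

/-- The hook `H(i,c)`. -/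
def Hook (d : ℕ) (lam : ℕ → ℕ) (i c : ℤ) : Set (ℤ × ℤ) :=
  {(i, c)} ∪ {p ∈ Diagram d lam | (p.1 = i ∧ c < p.2) ∨ (p.2 = c ∧ i < p.1)} ∪
    {p ∈ Diagram d lam | c < 0 ∧ p.1 = (d : ℤ) + 1 + c}

/-- The extended hook `H̃(i,c)`. -/
def ExtHook (d : ℕ) (lam : ℕ → ℕ) (i c : ℤ) : Set (ℤ × ℤ) :=
  Hook d lam i c ∪ {p : ℤ × ℤ | c < 0 ∧ p = ((d : ℤ) + 1 + c, c)}

/-- The extended diagram `D(λ) ∪ {(i, i - d - 1) : 1 ≤ i ≤ d}`. -/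
def ExtDiagram (d : ℕ) (lam : ℕ → ℕ) : Set (ℤ × ℤ) :=
  Diagram d lam ∪ {p : ℤ × ℤ | 1 ≤ p.1 ∧ p.1 ≤ (d : ℤ) ∧ p.2 = p.1 - ((d : ℤ) + 1)}

/-- The extended filling `B̃`, with `B̃(i, i - d - 1) = B(i, 0)`. -/
def ExtFilling (d : ℕ) (B : ℤ × ℤ → ℕ) : ℤ × ℤ → ℕ :=
  fun p => if p.2 = p.1 - ((d : ℤ) + 1) then B (p.1, 0) else B p

/-- The rank function `rk(i,c)`. -/
def rk (d : ℕ) (lam : ℕ → ℕ) (i c : ℤ) : ℤ :=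
  if 0 ≤ c then (lam i.toNat : ℤ) - d + i - c
  else (lam i.toNat : ℤ) - d + i + (lam ((d : ℤ) + 1 + c).toNat : ℤ) + c + 1

/-- A bijective filling of `D(λ)` with `1, …, |λ|` (normalized to be `0` off the diagram). -/
def IsFilling (d : ℕ) (lam : ℕ → ℕ) (B : ℤ × ℤ → ℕ) : Prop :=
  Set.BijOn B (Diagram d lam) (Set.Icc 1 (sizeP d lam)) ∧
    ∀ p : ℤ × ℤ, p ∉ Diagram d lam → B p = 0

/-- A balanced shifted tableau: a bijective filling such that at each box `(i,c)`,
`B(i,c)` is the `rk(i,c)`-th largest entry of the multiset of values of `B̃` on the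
extended hook, i.e. exactly `rk(i,c) - 1` boxes of the extended hook carry a value
strictly larger than `B(i,c)`. -/
def IsBalanced (d : ℕ) (lam : ℕ → ℕ) (B : ℤ × ℤ → ℕ) : Prop :=
  IsFilling d lam B ∧ ∀ p ∈ Diagram d lam,
    ({q ∈ ExtHook d lam p.1 p.2 | B p < ExtFilling d B q}.ncard : ℤ) =
      rk d lam p.1 p.2 - 1

/-- A standard Young tableau of shifted shape `λ`. -/
def IsSYT (d : ℕ) (lam : ℕ → ℕ) (B : ℤ × ℤ → ℕ) : Prop :=
  IsFilling d lam B ∧ ∀ p ∈ Diagram d lam, ∀ q ∈ Diagram d lam,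
    ((p.1 = q.1 ∧ p.2 < q.2) → B p < B q) ∧ ((p.2 = q.2 ∧ p.1 < q.1) → B p < B q)

/-- The simple reflections of `W(B_n)`, acting on `ℤ`: `s 0` swaps `1 ↔ -1`,
and `s a` (for `a ≥ 1`) swaps `a ↔ a+1` and `-a ↔ -(a+1)`. -/
def sB (a : ℕ) : Equiv.Perm ℤ :=
  if a = 0 then Equiv.swap 1 (-1)
  else Equiv.swap (a : ℤ) ((a : ℤ) + 1) * Equiv.swap (-(a : ℤ)) (-(a : ℤ) - 1)

/-- The product `s_{a_1} s_{a_2} ⋯ s_{a_m}` of a word. -/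
def wordProd (L : List ℕ) : Equiv.Perm ℤ := (L.map sB).prod

/-- A signed permutation in `W(B_n)`: odd, and the identity beyond `n`. -/
def IsSignedPerm (n : ℕ) (w : Equiv.Perm ℤ) : Prop :=
  (∀ i : ℤ, w (-i) = -(w i)) ∧ ∀ i : ℤ, (n : ℤ) < |i| → w i = i

/-- The Coxeter length of `w` in `W(B_n)`. -/
noncomputable def lengthB (n : ℕ) (w : Equiv.Perm ℤ) : ℕ :=
  sInf {m : ℕ | ∃ L : List ℕ, (∀ a ∈ L, a < n) ∧ wordProd L = w ∧ L.length = m}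

/-- `L` is a reduced word of `w` in `W(B_n)`. -/
def IsReducedWord (n : ℕ) (w : Equiv.Perm ℤ) (L : List ℕ) : Prop :=
  (∀ a ∈ L, a < n) ∧ wordProd L = w ∧ L.length = lengthB n w

/-- The vector `e_k` (for `k ≥ 1` the `k`-th standard basis vector, with the
conventions `e 0 = 0` and `e (-k) = - e k`), represented as an odd function `ℤ → ℤ`. -/
def eVec (k : ℤ) : ℤ → ℤ :=
  fun t => if t = 0 then 0 else if t = k then 1 else if t = -k then -1 else 0

/-- The positive roots of type `B_n`. -/
def PosRoots (n : ℕ) : Set (ℤ → ℤ) :=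
  {v | (∃ i j : ℤ, 1 ≤ i ∧ i < j ∧ j ≤ (n : ℤ) ∧
        (v = eVec j - eVec i ∨ v = eVec j + eVec i)) ∨
       (∃ i : ℤ, 1 ≤ i ∧ i ≤ (n : ℤ) ∧ v = eVec i)}

/-- The action of a signed permutation on vectors: `w · e_i = e_{w(i)}`. -/
def actB (w : Equiv.Perm ℤ) (v : ℤ → ℤ) : ℤ → ℤ := fun t => v (w⁻¹ t)

/-- The inversion set `Inv(w) = {α ∈ Φ⁺ : w⁻¹ · α ∈ -Φ⁺}`. -/
def InvSet (n : ℕ) (w : Equiv.Perm ℤ) : Set (ℤ → ℤ) :=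
  {α | α ∈ PosRoots n ∧ -(actB w⁻¹ α) ∈ PosRoots n}

/-- The simple roots: `α_0 = e_1` and `α_a = e_{a+1} - e_a` for `a ≥ 1`. -/
def alphaRoot (a : ℕ) : ℤ → ℤ :=
  if a = 0 then eVec 1 else eVec ((a : ℤ) + 1) - eVec (a : ℤ)

/-- The reflection order of a word: `reflOrder L t = γ_{t+1} = s_{a_1} ⋯ s_{a_t} · α_{a_{t+1}}`
(0-indexed). -/
def reflOrder (L : List ℕ) (t : ℕ) : ℤ → ℤ :=
  actB (wordProd (L.take t)) (alphaRoot (L.getD t 0))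

/-- The trapezoid `Z(d,r) = (r+2d-1, r+2d-3, …, r+1)`. -/
def Zlam (d r : ℕ) : ℕ → ℕ := fun i => r + 2 * d + 1 - 2 * i

/-- The labeling `f : D(Z(d,r)) → Φ⁺`. -/
def fLabel (d r : ℕ) (p : ℤ × ℤ) : ℤ → ℤ :=
  if p.2 ≤ 0 then eVec ((d : ℤ) + 1 - p.1) - eVec p.2
  else if p.2 ≤ (r : ℤ) then eVec ((d : ℤ) + 1 - p.1) + eVec (p.2 + (d : ℤ))
  else eVec ((d : ℤ) + 1 - p.1) - eVec (p.2 - (r : ℤ))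

/-- The extended labeling `f̃`, with `f̃(i, i - d - 1) = 2 e_{d+1-i}`. -/
def fExtLabel (d r : ℕ) (p : ℤ × ℤ) : ℤ → ℤ :=
  if p.2 = p.1 - ((d : ℤ) + 1) then (2 : ℤ) • eVec ((d : ℤ) + 1 - p.1)
  else fLabel d r p

/-- `w` is the signed permutation `w^{(d,r)} ∈ W(B_{d+r})`, i.e.
`w(i) = d + i` for `1 ≤ i ≤ r` and `w(i) = -(i - r)` for `r < i ≤ d + r`. -/
def IsWdr (d r : ℕ) (w : Equiv.Perm ℤ) : Prop :=
  IsSignedPerm (d + r) w ∧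
    (∀ i : ℤ, 1 ≤ i → i ≤ (r : ℤ) → w i = (d : ℤ) + i) ∧
    (∀ i : ℤ, (r : ℤ) < i → i ≤ (d : ℤ) + (r : ℤ) → w i = -(i - r))


/-- `x` lies strictly between `y` and `z` (i.e. `min(y,z) < x < max(y,z)`). -/
def Between (x y z : ℕ) : Prop := (y < x ∧ x < z) ∨ (z < x ∧ x < y)

/-- A nonempty list is unimodal: strictly decreasing down to its minimum
(at 0-indexed position `k`), then strictly increasing. -/
def Unimodal (L : List ℕ) : Prop :=
  ∃ k : ℕ, k < L.length ∧
    (∀ a b : ℕ, a < b → b ≤ k → L.getD b 0 < L.getD a 0) ∧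
    (∀ a b : ℕ, k ≤ a → a < b → b < L.length → L.getD a 0 < L.getD b 0)

/-- Row `i` of the distinguished tableau of shape `Z(d,r)`:
`(r+d-i, …, r+1, 0, 1, …, r+d-i)`. -/
def rowWord (d r i : ℕ) : List ℕ :=
  (List.range (r + 2 * (d - i) + 1)).map fun t =>
    if t < d - i then r + (d - i) - t else t - (d - i)

/-- The reading word `π(T) = T_d T_{d-1} ⋯ T_1` of the distinguished tableau of
shape `Z(d,r)`. -/
def piWord (d r : ℕ) : List ℕ :=
  (List.range d).flatMap fun k => rowWord d r (d - k)

/-- `μ_i = Z(d,r)_i - λ_i`. -/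
def muF (d r : ℕ) (lam : ℕ → ℕ) (i : ℕ) : ℕ := r + 2 * d + 1 - 2 * i - lam i

/-- `σ_i = μ_1 + ⋯ + μ_i`. -/
def sigmaF (d r : ℕ) (lam : ℕ → ℕ) (i : ℕ) : ℕ := ∑ t ∈ Finset.Icc 1 i, muF d r lam t

/-- `ν_i = min{μ_i, …, μ_d}`. -/
noncomputable def nuF (d r : ℕ) (lam : ℕ → ℕ) (i : ℕ) : ℕ :=
  sInf {m : ℕ | ∃ j : ℕ, i ≤ j ∧ j ≤ d ∧ m = muF d r lam j}

/-- The word `a^λ`: the concatenation over `i = 1, …, d` of the increasing runs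
`(d+r-i-μ_i+1, …, d+r-i)`. -/
def aLamWord (d r : ℕ) (lam : ℕ → ℕ) : List ℕ :=
  (List.range d).flatMap fun k =>
    (List.range (muF d r lam (k + 1))).map fun t =>
      d + r - (k + 1) - muF d r lam (k + 1) + 1 + t

/-- Row `i` of the tableau `P(w^λ)`: entries `P(i,c) = c` for `c ≥ 0` and
`P(i,c) = r - c - ν_{d+1+c}` for `c < 0`. -/
noncomputable def rowWordP (d r : ℕ) (lam : ℕ → ℕ) (i : ℕ) : List ℕ :=
  (List.range (lam i)).map fun t =>
    if t < d - i then r + (d - i) - t - nuF d r lam (i + 1 + t) else t - (d - i)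

/-- The reading word `π(P(w^λ))`. -/
noncomputable def piWordP (d r : ℕ) (lam : ℕ → ℕ) : List ℕ :=
  (List.range d).flatMap fun k => rowWordP d r lam (d - k)

/-- The shape obtained from `λ` by adding one box at the end of row `i`. -/
def stepShape (lam : ℕ → ℕ) (i : ℕ) : ℕ → ℕ :=
  fun t => if t = i then lam i + 1 else lam t

/-- The box-adding map `f_i` on fillings: swap columns `j = λ_i + i - d` and `j + 1`
(in rows `1, …, i-1`), and put the value `N + 1` in the new box `(i, j)`. -/
def addBox (d : ℕ) (lam : ℕ → ℕ) (i : ℕ) (N : ℕ) (B : ℤ × ℤ → ℕ) : ℤ × ℤ → ℕ :=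
  fun p =>
    if p = ((i : ℤ), (lam i : ℤ) + (i : ℤ) - (d : ℤ)) then N + 1
    else if 1 ≤ p.1 ∧ p.1 < (i : ℤ) ∧ p.2 = (lam i : ℤ) + (i : ℤ) - (d : ℤ) then
      B (p.1, p.2 + 1)
    else if 1 ≤ p.1 ∧ p.1 < (i : ℤ) ∧ p.2 = (lam i : ℤ) + (i : ℤ) - (d : ℤ) + 1 then
      B (p.1, p.2 - 1)
    else B p

/-- Successively apply the box-adding maps along a list of row indices,
tracking the current shape. -/
def FmapAux (d : ℕ) : List ℕ → (ℕ → ℕ) → (ℤ × ℤ → ℕ) → (ℤ × ℤ → ℕ)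
  | [], _, B => B
  | i :: rest, lam, B => FmapAux d rest (stepShape lam i) (addBox d lam i (sizeP d lam) B)

/-- The shape after successively adding boxes along a list of row indices. -/
def shapeAux : List ℕ → (ℕ → ℕ) → (ℕ → ℕ)
  | [], lam => lam
  | i :: rest, lam => shapeAux rest (stepShape lam i)

/-- The list of row indices `1^{μ_1} 2^{μ_2} ⋯ d^{μ_d}` used to pad `λ` to `Z(d,r)`. -/
def rowsList (d r : ℕ) (lam : ℕ → ℕ) : List ℕ :=
  (List.range d).flatMap fun k => List.replicate (muF d r lam (k + 1)) (k + 1)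

/-- `BS(Z(d,r))|_λ`: balanced tableaux of shape `Z(d,r)` such that for each
`i ∈ {1,…,d}` the entries `N + σ_{i-1} + 1, …, N + σ_i` all occur in row `i`. -/
def BSRestricted (d r : ℕ) (lam : ℕ → ℕ) : Set (ℤ × ℤ → ℕ) :=
  {T | IsBalanced d (Zlam d r) T ∧ ∀ i : ℕ, 1 ≤ i → i ≤ d →
    ∀ k : ℕ, sizeP d lam + sigmaF d r lam (i - 1) + 1 ≤ k →
      k ≤ sizeP d lam + sigmaF d r lam i →
      ∃ c : ℤ, ((i : ℤ), c) ∈ Diagram d (Zlam d r) ∧ T ((i : ℤ), c) = k}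

/-- `w ∈ W(B_n)` pattern embeds the signed pattern `v` (given as its one-line
notation, a list of nonzero integers). -/
def PatternEmbeds (n : ℕ) (w : Equiv.Perm ℤ) (v : List ℤ) : Prop :=
  ∃ idx : Fin v.length → ℤ, StrictMono idx ∧
    (∀ j, 1 ≤ idx j ∧ idx j ≤ (n : ℤ)) ∧
    (∀ j, 0 < w (idx j) ↔ 0 < v.get j) ∧
    (∀ j k, |w (idx j)| < |w (idx k)| ↔ |v.get j| < |v.get k|)


def tB (a b : ℤ) : Equiv.Perm ℤ :=
  if a = -b then Equiv.swap a b else Equiv.swap a b * Equiv.swap (-a) (-b)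

def yv (j : ℕ) : ℤ := if j = 0 then -1 else j

def LD (j : ℕ) (w : Equiv.Perm ℤ) : Prop := w⁻¹ ((j : ℤ) + 1) < w⁻¹ (yv j)

theorem sB_eq_tB (j : ℕ) : sB j = tB (yv j) ((j : ℤ) + 1) := by
  unfold sB tB yv
  rcases Nat.eq_zero_or_pos j with h | h
  · subst h; simp [Equiv.swap_comm]
  · have h0 : j ≠ 0 := by omega
    have h1 : (j : ℤ) ≠ -((j : ℤ) + 1) := by omega
    simp only [h0, if_false, h1]
    congr 2
    ring

theorem tB_apply {a b : ℤ} (ha : a ≠ 0) (hb : b ≠ 0) (hab : a ≠ b) (x : ℤ) :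
    tB a b x = if x = a then b else if x = b then a else if x = -a then -b
      else if x = -b then -a else x := by
  unfold tB
  split_ifs with h0 <;> simp only [Equiv.Perm.mul_apply, Equiv.swap_apply_def] <;> grind

theorem tB_comm (a b : ℤ) : tB a b = tB b a := by
  unfold tB
  by_cases h : a = -b
  · have h' : b = -a := by omega
    rw [if_pos h, if_pos h', Equiv.swap_comm]
  · have h' : ¬ b = -a := by omega
    rw [if_neg h, if_neg h', Equiv.swap_comm a, Equiv.swap_comm (-a)]

theorem tB_mul_self {a b : ℤ} (ha : a ≠ 0) (hb : b ≠ 0) (hab : a ≠ b) : tB a b * tB a b = 1 := by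
  ext x
  simp only [Equiv.Perm.mul_apply, tB_apply ha hb hab, Equiv.Perm.one_apply]
  grind

theorem tB_odd {a b : ℤ} (ha : a ≠ 0) (hb : b ≠ 0) (hab : a ≠ b) (x : ℤ) :
    tB a b (-x) = - tB a b x := by
  simp only [tB_apply ha hb hab]
  grind

theorem conj_tB (w : Equiv.Perm ℤ) (hw : ∀ i, w (-i) = - w i) (a b : ℤ) :
    w * tB a b = tB (w a) (w b) * w := by
  unfold tB
  have : a = -b ↔ w a = - w b := by rw [← hw, w.injective.eq_iff]
  by_cases h : a = -b
  · rw [if_pos h, if_pos (this.1 h), Equiv.mul_swap_eq_swap_mul]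
  · rw [if_neg h, if_neg (fun h' => h (this.2 h')), ← hw, ← hw, ← mul_assoc,
      Equiv.mul_swap_eq_swap_mul w a b, mul_assoc, Equiv.mul_swap_eq_swap_mul w, mul_assoc]

theorem yv_ne (j : ℕ) : yv j ≠ 0 := by unfold yv; split_ifs <;> omega
theorem yv_lt (j : ℕ) : yv j < (j : ℤ) + 1 := by unfold yv; split_ifs <;> omega

theorem sB_apply (j : ℕ) (x : ℤ) :
    sB j x = if x = yv j then (j : ℤ) + 1 else if x = (j : ℤ) + 1 then yv j
      else if x = -yv j then -((j : ℤ) + 1)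
      else if x = -((j : ℤ) + 1) then -yv j else x := by
  rw [sB_eq_tB, tB_apply (yv_ne j) (by omega) (by have := yv_lt j; omega)]

theorem sB_mul_self (j : ℕ) : sB j * sB j = 1 := by
  rw [sB_eq_tB, tB_mul_self (yv_ne j) (by omega) (by have := yv_lt j; omega)]

theorem sB_sB (j : ℕ) (x : ℤ) : sB j (sB j x) = x := by
  rw [← Equiv.Perm.mul_apply, sB_mul_self]; rfl

theorem sB_inv (j : ℕ) : (sB j)⁻¹ = sB j := inv_eq_of_mul_eq_one_left (sB_mul_self j)

theorem sB_odd (j : ℕ) (x : ℤ) : sB j (-x) = - sB j x := by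
  rw [sB_eq_tB, tB_odd (yv_ne j) (by omega) (by have := yv_lt j; omega)]

theorem mul_odd {u v : Equiv.Perm ℤ} (hu : ∀ i, u (-i) = - u i) (hv : ∀ i, v (-i) = - v i) (i : ℤ) :
    (u * v) (-i) = - (u * v) i := by
  simp [hu, hv]

theorem inv_odd {u : Equiv.Perm ℤ} (hu : ∀ i, u (-i) = - u i) (i : ℤ) :
    u⁻¹ (-i) = - u⁻¹ i := by
  rw [Equiv.Perm.inv_eq_iff_eq, hu]; simp

theorem wordProd_cons (a : ℕ) (L : List ℕ) : wordProd (a :: L) = sB a * wordProd L := by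
  simp [wordProd]

theorem sB_rev (j : ℕ) {α β : ℤ} (hα : α ≠ 0) (hβ : β ≠ 0) (h : α < β) (h' : sB j β ≤ sB j α) :
    (α = yv j ∧ β = (j : ℤ) + 1) ∨ (α = -((j : ℤ) + 1) ∧ β = - yv j) := by
  rw [sB_apply, sB_apply] at h'
  unfold yv at *
  split_ifs at * <;> omega

theorem tB_neg {a b : ℤ} (ha : a ≠ 0) (hb : b ≠ 0) (hab : a ≠ b) : tB (-a) (-b) = tB a b := by
  ext x
  rw [tB_apply ha hb hab, tB_apply (by omega) (by omega) (by omega)]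
  split_ifs <;> omega

theorem exch (n : ℕ) (L : List ℕ) : (∀ a ∈ L, a < n) → ∀ α β : ℤ, α ≠ 0 → β ≠ 0 → α < β →
    (wordProd L)⁻¹ β < (wordProd L)⁻¹ α →
    ∃ L' : List ℕ, (∀ a ∈ L', a < n) ∧ L'.length + 1 = L.length ∧
      wordProd L' = tB α β * wordProd L := by
  induction L with
  | nil => intro _ α β _ _ h h'; simp [wordProd] at h'; omega
  | cons a L ih =>
    intro hL α β hα hβ hlt hinv
    rw [wordProd_cons, mul_inv_rev, sB_inv, Equiv.Perm.mul_apply, Equiv.Perm.mul_apply] at hinv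
    have hL' : ∀ a ∈ L, a < n := fun x hx => hL x (List.mem_cons_of_mem _ hx)
    by_cases hc : sB a α < sB a β
    · obtain ⟨L', h1, h2, h3⟩ := ih hL' (sB a α) (sB a β)
        (by rw [sB_apply]; have := yv_ne a; grind) (by rw [sB_apply]; have := yv_ne a; grind) hc hinv
      refine ⟨a :: L', ?_, ?_, ?_⟩
      · intro x hx
        rcases List.mem_cons.1 hx with h | h
        · exact hL x (by simp [h])
        · exact h1 x h
      · simp [h2]
      · rw [wordProd_cons, wordProd_cons, h3, ← mul_assoc, conj_tB _ (sB_odd a), sB_sB, sB_sB,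
          mul_assoc]
    · refine ⟨L, hL', by simp, ?_⟩
      have : sB a = tB α β := by
        rcases sB_rev a hα hβ hlt (not_lt.1 hc) with ⟨rfl, rfl⟩ | ⟨rfl, rfl⟩
        · exact sB_eq_tB a
        · rw [tB_neg (by omega) (yv_ne a) (by have := yv_lt a; omega), tB_comm]; exact sB_eq_tB a
      rw [wordProd_cons, ← mul_assoc, ← this, sB_mul_self, one_mul]

theorem LD_mul (j : ℕ) (w : Equiv.Perm ℤ) : LD j (sB j * w) ↔ ¬ LD j w := by
  unfold LD
  have h1 : sB j ((j : ℤ) + 1) = yv j := by rw [sB_apply]; have := yv_lt j; grind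
  have h2 : sB j (yv j) = (j : ℤ) + 1 := by rw [sB_apply]; simp
  rw [mul_inv_rev, sB_inv, Equiv.Perm.mul_apply, Equiv.Perm.mul_apply, h1, h2, not_lt]
  refine ⟨le_of_lt, fun h => lt_of_le_of_ne h ?_⟩
  intro h'
  have := yv_lt j
  have := (w⁻¹).injective h'
  omega

open Classical in
noncomputable def F (N : ℕ) : ℕ → Equiv.Perm ℤ → ℕ
  | 0, w => if w = 1 then 1 else 0
  | m + 1, w => ∑ j ∈ Finset.range N, if LD j w then F N m (sB j * w) else 0

open Classical in
noncomputable def DW (N : ℕ) : ℕ → Equiv.Perm ℤ → Finset (List ℕ)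
  | 0, w => if w = 1 then {[]} else ∅
  | m + 1, w => (Finset.range N).biUnion fun j =>
      if LD j w then (DW N m (sB j * w)).image (List.cons j) else ∅

theorem DW_card (N m : ℕ) : ∀ w, (DW N m w).card = F N m w := by
  classical
  induction m with
  | zero => intro w; simp only [DW, F]; split_ifs <;> simp
  | succ m ih =>
    intro w
    simp only [DW, F]
    rw [Finset.card_biUnion]
    · apply Finset.sum_congr rfl
      intro j _
      split_ifs
      · rw [Finset.card_image_of_injective _ (List.cons_injective), ih]
      · simp
    · intro i _ j _ hij
      rw [Function.onFun, Finset.disjoint_left]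
      intro L h1 h2
      split_ifs at h1 h2 <;> simp at h1 h2
      obtain ⟨a, _, rfl⟩ := h1
      obtain ⟨b, _, hb⟩ := h2
      simp at hb
      omega

theorem mem_DW_cons {N m : ℕ} {w : Equiv.Perm ℤ} {L : List ℕ} :
    L ∈ DW N (m + 1) w ↔ ∃ j L', L = j :: L' ∧ j < N ∧ LD j w ∧ L' ∈ DW N m (sB j * w) := by
  classical
  simp only [DW, Finset.mem_biUnion, Finset.mem_range]
  constructor
  · rintro ⟨j, hj, h⟩
    split_ifs at h with hl
    · simp at h
      obtain ⟨a, ha, rfl⟩ := h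
      exact ⟨j, a, rfl, hj, hl, ha⟩
    · simp at h
  · rintro ⟨j, a, rfl, hj, hl, ha⟩
    exact ⟨j, hj, by rw [if_pos hl]; simp [ha]⟩

theorem DW_word (n m : ℕ) : ∀ w L, L ∈ DW n m w →
    (∀ a ∈ L, a < n) ∧ wordProd L = w ∧ L.length = m := by
  classical
  induction m with
  | zero =>
    intro w L h
    simp only [DW] at h
    split_ifs at h with hw <;> simp at h
    subst h; simp [wordProd, hw]
  | succ m ih =>
    intro w L h
    obtain ⟨j, L', rfl, hj, hl, h⟩ := mem_DW_cons.1 h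
    obtain ⟨h1, h2, h3⟩ := ih _ _ h
    refine ⟨?_, ?_, by simp [h3]⟩
    · intro a ha
      rcases List.mem_cons.1 ha with h | h
      · omega
      · exact h1 a h
    · rw [wordProd_cons, h2, ← mul_assoc, sB_mul_self, one_mul]

theorem lengthB_le (n : ℕ) (L : List ℕ) (h : ∀ a ∈ L, a < n) : lengthB n (wordProd L) ≤ L.length :=
  Nat.sInf_le ⟨L, h, rfl, rfl⟩

theorem exch_LD (n : ℕ) (L : List ℕ) (hL : ∀ a ∈ L, a < n) (j : ℕ) (hj : LD j (wordProd L)) :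
    ∃ L' : List ℕ, (∀ a ∈ L', a < n) ∧ L'.length + 1 = L.length ∧
      wordProd L' = sB j * wordProd L := by
  rw [sB_eq_tB]
  exact exch n L hL _ _ (yv_ne j) (by omega) (yv_lt j) hj

theorem red_mem_DW (n m : ℕ) : ∀ w L, (∀ a ∈ L, a < n) → wordProd L = w → L.length = m →
    lengthB n w = m → L ∈ DW n m w := by
  classical
  induction m with
  | zero =>
    intro w L h1 h2 h3 h4
    have : L = [] := List.length_eq_zero_iff.1 h3
    subst this
    simp [wordProd] at h2
    simp [DW, h2]
  | succ m ih =>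
    intro w L h1 h2 h3 h4
    obtain ⟨j, L', rfl⟩ : ∃ j L', L = j :: L' := by
      cases L with
      | nil => simp at h3
      | cons a b => exact ⟨a, b, rfl⟩
    have hL' : ∀ a ∈ L', a < n := fun x hx => h1 x (List.mem_cons_of_mem _ hx)
    simp at h3
    rw [wordProd_cons] at h2
    have hw' : wordProd L' = sB j * w := by rw [← h2, ← mul_assoc, sB_mul_self, one_mul]
    refine mem_DW_cons.2 ⟨j, L', rfl, h1 j (by simp), ?_, ?_⟩
    · by_contra hc
      rw [← LD_mul, ← hw'] at hc
      obtain ⟨L2, q1, q2, q3⟩ := exch_LD n L' hL' j hc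
      rw [h2] at q3
      have := lengthB_le n L2 q1
      rw [q3] at this
      omega
    · refine ih _ _ hL' hw' h3 ?_
      apply le_antisymm
      · rw [← hw', ← h3]; exact lengthB_le n L' hL'
      · have hne : {m : ℕ | ∃ L : List ℕ, (∀ a ∈ L, a < n) ∧ wordProd L = sB j * w ∧ L.length = m}.Nonempty :=
          ⟨_, L', hL', hw', rfl⟩
        obtain ⟨L3, q1, q2, q3⟩ := Nat.sInf_mem hne
        have h5 : lengthB n (sB j * w) = L3.length := q3.symm
        have := lengthB_le n (j :: L3) (by
          intro a ha
          rcases List.mem_cons.1 ha with h | h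
          · exact h1 a (by simp [h])
          · exact q1 a h)
        rw [wordProd_cons, q2, ← mul_assoc, sB_mul_self, one_mul, h4] at this
        simp at this
        omega

theorem DW_length (n m : ℕ) : ∀ w L, L ∈ DW n m w → lengthB n w = m := by
  classical
  induction m with
  | zero =>
    intro w L h
    obtain ⟨h1, h2, h3⟩ := DW_word n 0 w L h
    have := lengthB_le n L h1
    rw [h2] at this; omega
  | succ m ih =>
    intro w L h
    obtain ⟨h1, h2, h3⟩ := DW_word n _ w L h
    obtain ⟨j, L', rfl, hj, hl, h⟩ := mem_DW_cons.1 h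
    have e := ih _ _ h
    apply le_antisymm
    · rw [← h2, ← h3]; exact lengthB_le n _ h1
    · have hne : {m : ℕ | ∃ L : List ℕ, (∀ a ∈ L, a < n) ∧ wordProd L = w ∧ L.length = m}.Nonempty :=
        ⟨_, _, h1, h2, rfl⟩
      obtain ⟨L3, q1, q2, q3⟩ := Nat.sInf_mem hne
      have h5 : lengthB n w = L3.length := q3.symm
      rw [← q2] at hl
      obtain ⟨L2, p1, p2, p3⟩ := exch_LD n L3 q1 j hl
      have := lengthB_le n L2 p1
      rw [p3, q2, e] at this
      omega

theorem red_card (n : ℕ) (w : Equiv.Perm ℤ) :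
    Nat.card {L : List ℕ // IsReducedWord n w L} = F n (lengthB n w) w := by
  rw [← DW_card]
  have : ∀ L, IsReducedWord n w L ↔ L ∈ DW n (lengthB n w) w := by
    intro L
    constructor
    · rintro ⟨h1, h2, h3⟩
      exact red_mem_DW n _ w L h1 h2 h3 rfl
    · intro h
      exact DW_word n _ w L h
  simp only [this]
  simp

theorem F_length (n m : ℕ) (w : Equiv.Perm ℤ) (h : F n m w ≠ 0) : lengthB n w = m := by
  rw [← DW_card, Finset.card_ne_zero] at h
  obtain ⟨L, hL⟩ := h
  exact DW_length n m w L hL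

theorem signed_mul {n : ℕ} {u v : Equiv.Perm ℤ} (hu : IsSignedPerm n u) (hv : IsSignedPerm n v) :
    IsSignedPerm n (u * v) := by
  refine ⟨mul_odd hu.1 hv.1, fun i hi => ?_⟩
  rw [Equiv.Perm.mul_apply, hv.2 i hi, hu.2 i hi]

theorem signed_inv {n : ℕ} {u : Equiv.Perm ℤ} (hu : IsSignedPerm n u) : IsSignedPerm n u⁻¹ := by
  refine ⟨inv_odd hu.1, fun i hi => ?_⟩
  rw [Equiv.Perm.inv_eq_iff_eq, hu.2 i hi]

theorem signed_tB {n : ℕ} {a b : ℤ} (ha : a ≠ 0) (hb : b ≠ 0) (hab : a ≠ b) (h1 : |a| ≤ n)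
    (h2 : |b| ≤ n) : IsSignedPerm n (tB a b) := by
  refine ⟨tB_odd ha hb hab, fun i hi => ?_⟩
  rw [tB_apply ha hb hab]
  have e1 : i ≠ a := by rintro rfl; omega
  have e2 : i ≠ b := by rintro rfl; omega
  have e3 : i ≠ -a := by rintro rfl; rw [abs_neg] at hi; omega
  have e4 : i ≠ -b := by rintro rfl; rw [abs_neg] at hi; omega
  simp [e1, e2, e3, e4]

theorem signed_sB {n j : ℕ} (h : j < n) : IsSignedPerm n (sB j) := by
  rw [sB_eq_tB]
  apply signed_tB (yv_ne j) (by omega) (yv_lt j).ne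
  · unfold yv; split_ifs
    · simp; omega
    · simp; omega
  · rw [abs_of_nonneg] <;> omega

theorem LD_lt {n j : ℕ} {w : Equiv.Perm ℤ} (hw : IsSignedPerm n w) (h : LD j w) : j < n := by
  by_contra hc
  unfold LD yv at h
  have hw' := signed_inv hw
  have e1 := hw'.2 ((j : ℤ) + 1) (by rw [abs_of_nonneg] <;> omega)
  rw [e1] at h
  split_ifs at h with h0
  · have e2 := hw'.2 (-1) (by simp; omega)
    omega
  · have hinj : w⁻¹ (j : ℤ) ≠ (j : ℤ) + 1 := by
      intro h'
      rw [← e1] at h'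
      have := (w⁻¹).injective h'
      omega
    have : (n : ℤ) < |w⁻¹ (j : ℤ)| := by
      rw [abs_of_nonneg] <;> omega
    have e3 := hw.2 _ this
    have e4 : w (w⁻¹ (j : ℤ)) = j := by simp
    omega

theorem F_window (n N m : ℕ) (hN : n ≤ N) : ∀ w, IsSignedPerm n w → F n m w = F N m w := by
  induction m with
  | zero => intro w _; rfl
  | succ m ih =>
    intro w hw
    simp only [F]
    symm
    rw [← Finset.sum_subset (Finset.range_mono hN)]
    · apply Finset.sum_congr rfl
      intro j hj
      split_ifs
      · exact (ih _ (signed_mul (signed_sB (Finset.mem_range.1 hj)) hw)).symm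
      · rfl
    · intro j _ hj
      rw [if_neg]
      intro h
      exact hj (Finset.mem_range.2 (LD_lt hw h))

def Cov (f : ℤ → ℤ) (a b : ℤ) : Prop :=
  f a < f b ∧ ∀ c, a < c → c < b → (c ≠ 0 ∨ a ≠ -b) → ¬ (f a < f c ∧ f c < f b)

theorem Cov_neg {f : ℤ → ℤ} (odd : ∀ c, f (-c) = - f c) {a b : ℤ} (h : Cov f a b) :
    Cov f (-b) (-a) := by
  refine ⟨by rw [odd, odd]; have := h.1; omega, fun c h1 h2 h3 h4 => ?_⟩
  refine h.2 (-c) (by omega) (by omega) (by omega) ?_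
  rw [odd] at h4 ⊢
  rw [odd] at h4
  omega

def tf (a b x : ℤ) : ℤ := if x = a then b else if x = b then a else if x = -a then -b
      else if x = -b then -a else x

theorem tf_neg {a b : ℤ} (ha : a ≠ 0) (hb : b ≠ 0) (hab : a ≠ b) (x : ℤ) :
    tf a b (-x) = - tf a b x := by
  have := tB_odd ha hb hab x
  rwa [tB_apply ha hb hab, tB_apply ha hb hab] at this

theorem tf_neg' {a b : ℤ} (ha : a ≠ 0) (hb : b ≠ 0) (hab : a ≠ b) (x : ℤ) :
    tf (-b) (-a) x = tf a b x := by
  unfold tf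
  split_ifs <;> omega

/-- if `t` reverses a noninverted adjacent pair, no cover. -/
theorem R0 {f : ℤ → ℤ} (odd : ∀ c, f (-c) = - f c) (inj : ∀ c d, c ≠ d → f c ≠ f d)
    {a b P Q : ℤ} (hab : a < b) (ha : a ≠ 0) (hb : b ≠ 0) (hP : P ≠ 0) (hQ : Q ≠ 0)
    (hPQ : P < Q) (hf : f P < f Q) (adj : ∀ c, c ≠ 0 → ¬ (f P < f c ∧ f c < f Q))
    (hne : ¬ (P = a ∧ Q = b)) (hne' : ¬ (P = -b ∧ Q = -a)) (hin : P = a ∨ P = b ∨ Q = a ∨ Q = b)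
    (ht : tf a b Q < tf a b P) : ¬ Cov f a b := by
  intro hc
  have f0 : f 0 = 0 := by have := odd 0; simp at this; omega
  unfold tf at ht
  have na := inj a 0 ha
  have nb := inj b 0 hb
  have hlt := hc.1
  rcases hin with rfl | rfl | rfl | rfl
  · have hQb : Q ≠ b := by omega
    by_cases h1 : Q = -P
    · subst h1
      have i0 := hc.2 0 (by omega) (by rw [if_pos rfl, if_neg (by omega), if_neg hQb, if_pos rfl] at ht; omega) (Or.inr (by omega))
      have h5 := adj b hb
      have h6 := inj b (-P) (by omega)
      rw [odd] at hf h5 h6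
      omega
    · by_cases h2 : Q = -b
      · split_ifs at ht <;> omega
      · rw [if_pos rfl, if_neg (by omega), if_neg hQb, if_neg h1, if_neg h2] at ht
        have i := hc.2 Q hPQ ht (Or.inl hQ)
        have := adj b hb
        have := inj Q b hQb
        omega
  · split_ifs at ht <;> omega
  · split_ifs at ht <;> omega
  · have hPa : P ≠ a := by omega
    by_cases h1 : P = -Q
    · subst h1
      have i0 := hc.2 0 (by split_ifs at ht <;> omega) (by omega) (Or.inr (by omega))
      have h5 := adj a ha
      have h6 := inj a (-Q) (by omega)
      rw [odd] at hf h5 h6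
      omega
    · by_cases h2 : P = -a
      · split_ifs at ht <;> omega
      · rw [if_neg (by omega), if_pos rfl, if_neg (by omega), if_neg (by omega), if_neg h2, if_neg h1] at ht
        have i := hc.2 P ht hPQ (Or.inl hP)
        have := adj a ha
        have := inj P a hPa
        omega

theorem R1 {f : ℤ → ℤ} (odd : ∀ c, f (-c) = - f c) (inj : ∀ c d, c ≠ d → f c ≠ f d)
    {a b P Q : ℤ} (hab : a < b) (ha : a ≠ 0) (hb : b ≠ 0) (hP : P ≠ 0) (hQ : Q ≠ 0)
    (hPQ : P < Q) (hf : f P < f Q) (adj : ∀ c, c ≠ 0 → ¬ (f P < f c ∧ f c < f Q))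
    (hne : ¬ (P = a ∧ Q = b)) (hne' : ¬ (P = -b ∧ Q = -a))
    (ht : tf a b Q < tf a b P) : ¬ Cov f a b := by
  by_cases hin : P = a ∨ P = b ∨ Q = a ∨ Q = b
  · exact R0 odd inj hab ha hb hP hQ hPQ hf adj hne hne' hin ht
  by_cases hin' : P = -a ∨ P = -b ∨ Q = -a ∨ Q = -b
  · refine R0 (P := -Q) (Q := -P) odd inj hab ha hb (by omega) (by omega) (by omega)
      (by rw [odd, odd]; omega) ?_ (by omega) (by omega) (by omega) ?_
    · intro c hc h
      apply adj (-c) (by omega)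
      rw [odd] at h ⊢
      rw [odd] at h
      omega
    · rw [tf_neg ha hb hab.ne, tf_neg ha hb hab.ne]; omega
  · exfalso
    unfold tf at ht
    push Not at hin hin'
    simp only [hin.1, hin.2.1, hin.2.2.1, hin.2.2.2, hin'.1, hin'.2.1, hin'.2.2.1, hin'.2.2.2,
      if_false] at ht
    omega

structure Setup (f g : ℤ → ℤ) (y z P Q : ℤ) : Prop where
  odd : ∀ c, f (-c) = - f c
  oddg : ∀ c, g (-c) = - g c
  inj : ∀ c d, c ≠ d → f c ≠ f d
  injg : ∀ c d, c ≠ d → g c ≠ g d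
  hyz : (y = -1 ∧ z = 1 ∧ P = -Q) ∨ (1 ≤ y ∧ z = y + 1) ∨ (z ≤ -1 ∧ z = y + 1)
  hP : f P = y
  hQ : f Q = z
  hgP : g P = z
  hgQ : g Q = y
  hg : ∀ c, c ≠ P → c ≠ Q → c ≠ -P → c ≠ -Q → g c = f c

theorem Setup.neg {f g : ℤ → ℤ} {y z P Q : ℤ} (S : Setup f g y z P Q) :
    Setup f g (-z) (-y) (-Q) (-P) := by
  obtain ⟨odd, oddg, inj, injg, hyz, hP, hQ, hgP, hgQ, hg⟩ := S
  exact ⟨odd, oddg, inj, injg, by omega, by rw [odd, hQ], by rw [odd, hP], by rw [oddg, hgQ],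
    by rw [oddg, hgP], fun c h1 h2 h3 h4 => hg c (by omega) (by omega) (by omega) (by omega)⟩

theorem Setup.symm {f g : ℤ → ℤ} {y z P Q : ℤ} (S : Setup f g y z P Q) :
    Setup g f y z Q P := by
  obtain ⟨odd, oddg, inj, injg, hyz, hP, hQ, hgP, hgQ, hg⟩ := S
  exact ⟨oddg, odd, injg, inj, by omega, hgQ, hgP, hQ, hP,
    fun c h1 h2 h3 h4 => (hg c h2 h1 h4 h3).symm⟩

theorem Setup.zero {f g : ℤ → ℤ} {y z P Q : ℤ} (S : Setup f g y z P Q) :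
    f 0 = 0 ∧ g 0 = 0 ∧ P ≠ 0 ∧ Q ≠ 0 ∧ P ≠ Q := by
  obtain ⟨odd, oddg, inj, injg, hyz, hP, hQ, hgP, hgQ, hg⟩ := S
  have f0 : f 0 = 0 := by have := odd 0; simp at this; omega
  have g0 : g 0 = 0 := by have := oddg 0; simp at this; omega
  refine ⟨f0, g0, ?_, ?_, ?_⟩ <;> rintro rfl <;> omega

set_option maxHeartbeats 4000000 in
/-- order reversal between `f` and `g`. -/
theorem Setup.rev {f g : ℤ → ℤ} {y z P Q : ℤ} (S : Setup f g y z P Q) {c a : ℤ}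
    (h : f c < f a) (h' : g a < g c) :
    (c = P ∧ a = Q) ∨ (c = -Q ∧ a = -P) ∨ (P = -Q ∧ c = 0 ∧ a = Q) ∨ (P = -Q ∧ c = P ∧ a = 0) := by
  have Z := S.zero
  obtain ⟨odd, oddg, inj, injg, hyz, hP, hQ, hgP, hgQ, hg⟩ := S
  have e : ∀ c, (c = P ∧ f c = y ∧ g c = z) ∨ (c = Q ∧ f c = z ∧ g c = y) ∨
    (c = -P ∧ f c = -y ∧ g c = -z) ∨ (c = -Q ∧ f c = -z ∧ g c = -y) ∨
    (c ≠ P ∧ c ≠ Q ∧ g c = f c ∧ f c ≠ y ∧ f c ≠ z ∧ f c ≠ -y ∧ f c ≠ -z) := by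
    intro c
    by_cases h1 : c = P
    · left; rw [h1]; exact ⟨rfl, hP, hgP⟩
    by_cases h2 : c = Q
    · right; left; rw [h2]; exact ⟨rfl, hQ, hgQ⟩
    by_cases h3 : c = -P
    · right; right; left; rw [h3, odd, oddg, hP, hgP]; exact ⟨rfl, rfl, rfl⟩
    by_cases h4 : c = -Q
    · right; right; right; left; rw [h4, odd, oddg, hQ, hgQ]; exact ⟨rfl, rfl, rfl⟩
    · right; right; right; right
      have i1 := inj c P h1
      have i2 := inj c Q h2
      have i3 := inj c _ h3
      have i4 := inj c _ h4
      rw [odd] at i3 i4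
      exact ⟨h1, h2, hg c h1 h2 h3 h4, by omega, by omega, by omega, by omega⟩
  have hc0 : c = 0 ∨ f c ≠ 0 := by
    by_cases h0 : c = 0
    · exact Or.inl h0
    · right; have := inj c 0 h0; omega
  have ha0 : a = 0 ∨ f a ≠ 0 := by
    by_cases h0 : a = 0
    · exact Or.inl h0
    · right; have := inj a 0 h0; omega
  have ea := e a
  have ec := e c
  obtain ⟨z1, z2, z3, z4, z5⟩ := Z
  generalize f c = fc at *
  generalize g c = gc at *
  generalize f a = fa at *
  generalize g a = ga at *
  clear e hg inj injg odd oddg hP hQ hgP hgQ z1 z2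
  rcases hyz with ⟨y1, y2, y3⟩ | ⟨y1, y2⟩ | ⟨y1, y2⟩ <;>
  rcases ea with ⟨e1, e2, e3⟩ | ⟨e1, e2, e3⟩ | ⟨e1, e2, e3⟩ | ⟨e1, e2, e3⟩ | ⟨e1, e2, e3, e4⟩ <;>
  rcases ec with ⟨e1', e2', e3'⟩ | ⟨e1', e2', e3'⟩ | ⟨e1', e2', e3'⟩ | ⟨e1', e2', e3'⟩ | ⟨e1', e2', e3', e4'⟩ <;>
  omega

/-- one half of preservation -/
theorem S0 {f g : ℤ → ℤ} {y z P Q : ℤ} (S : Setup f g y z P Q) {a b : ℤ} (hab : a < b)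
    (ha : a ≠ 0) (hb : b ≠ 0) 
    (h2 : ¬ (a = Q ∧ b = P)) 
    (hc : Cov f a b) (ht : Q < P → tf a b Q < tf a b P) (c : ℤ) (hac : a < c) (hcb : c < b)
    (hcP : c = P) (haQ : a = Q) : False := by
  have hyz := S.hyz
  have hP := S.hP
  have hQ := S.hQ
  have odd := S.odd
  have hlt := hc.1
  subst haQ hcP
  have ht := ht hac
  unfold tf at ht
  rw [if_pos rfl, if_neg (by omega), if_neg (by omega)] at ht
  split_ifs at ht with h3 h4
  · omega
  · have := odd b
    rw [← h4] at this
    have f0 := S.zero.1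
    have i0 := hc.2 0 (by omega) (by omega) (by omega)
    omega
  · omega

theorem S1 {f g : ℤ → ℤ} {y z P Q : ℤ} (S : Setup f g y z P Q) {a b : ℤ} (hab : a < b)
    (ha : a ≠ 0) (hb : b ≠ 0) 
    (h2 : ¬ (a = Q ∧ b = P)) (h4 : ¬ (a = -P ∧ b = -Q))
    (hc : Cov f a b) (ht : Q < P → tf a b Q < tf a b P) (c : ℤ) (hac : a < c) (hcb : c < b)
    (h : f c < f a) (h' : g a < g c) : False := by
  rcases S.rev h h' with ⟨h5, h6⟩ | ⟨h5, h6⟩ | ⟨h5, h6, h7⟩ | ⟨h5, h6, h7⟩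
  · exact S0 S hab ha hb h2 hc ht c hac hcb h5 h6
  · refine S0 S.neg hab ha hb h4 hc ?_ c hac hcb h5 h6
    rw [tf_neg ha hb hab.ne, tf_neg ha hb hab.ne]
    intro h; have := ht (by omega); omega
  · subst h6 h7
    have ht := ht (by omega)
    rw [h5, tf_neg ha hb hab.ne] at ht
    unfold tf at ht
    rw [if_pos rfl] at ht
    omega
  · omega

theorem S2 {f g : ℤ → ℤ} {y z P Q : ℤ} (S : Setup f g y z P Q) {a b : ℤ} (hab : a < b)
    (ha : a ≠ 0) (hb : b ≠ 0) (h1 : ¬ (a = P ∧ b = Q)) (h3 : ¬ (a = -Q ∧ b = -P))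
    (h2 : ¬ (a = Q ∧ b = P)) (h4 : ¬ (a = -P ∧ b = -Q))
    (hc : Cov f a b) (ht : Q < P → tf a b Q < tf a b P) : Cov g a b := by
  have Z := S.zero
  constructor
  · by_contra hle
    have := S.injg a b hab.ne
    rcases S.rev hc.1 (by omega) with h | h | h | h <;> omega
  · intro c hac hcb hc0 hh
    have n1 := S.inj c a hac.ne'
    have n2 := S.inj c b hcb.ne
    have i := hc.2 c hac hcb hc0
    by_cases h5 : f c < f a
    · exact S1 S hab ha hb h2 h4 hc ht c hac hcb h5 hh.1
    · refine S1 S (a := -b) (b := -a) (by omega) (by omega) (by omega) (by omega) (by omega)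
        (Cov_neg S.odd hc) ?_ (-c) (by omega) (by omega) ?_ ?_
      · rw [tf_neg' ha hb hab.ne, tf_neg' ha hb hab.ne]; exact ht
      · rw [S.odd, S.odd]; omega
      · rw [S.oddg, S.oddg]; omega

theorem adj {f g : ℤ → ℤ} {y z P Q : ℤ} (S : Setup f g y z P Q) (c : ℤ) (hc : c ≠ 0) :
    ¬ (f P < f c ∧ f c < f Q) := by
  have := S.inj c 0 hc
  have := S.zero.1
  have := S.hyz
  rw [S.hP, S.hQ]
  omega

theorem core {f g : ℤ → ℤ} {y z P Q : ℤ} (S : Setup f g y z P Q) {a b : ℤ} (hab : a < b)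
    (ha : a ≠ 0) (hb : b ≠ 0) (h1 : ¬ (a = P ∧ b = Q)) (h3 : ¬ (a = -Q ∧ b = -P))
    (h2 : ¬ (a = Q ∧ b = P)) (h4 : ¬ (a = -P ∧ b = -Q)) :
    (Cov f a b ∧ tf a b Q < tf a b P) ↔ (Q < P ∧ Cov g a b) := by
  have Z := S.zero
  constructor
  · rintro ⟨hc, ht⟩
    refine ⟨?_, S2 S hab ha hb h1 h3 h2 h4 hc (fun _ => ht)⟩
    by_contra hlt
    exact R1 S.odd S.inj hab ha hb Z.2.2.1 Z.2.2.2.1 (by omega)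
      (by have := S.hyz; rw [S.hP, S.hQ]; omega) (adj S) (by omega) (by omega) ht hc
  · rintro ⟨hlt, hc⟩
    have ht : tf a b Q < tf a b P := by
      by_contra ht
      refine R1 (P := Q) (Q := P) S.oddg S.injg hab ha hb Z.2.2.2.1 Z.2.2.1 hlt
        (by have := S.hyz; rw [S.hgP, S.hgQ]; omega) (adj S.symm) (by omega) (by omega) ?_ hc
      apply lt_of_le_of_ne (not_lt.1 ht)
      intro h
      have e : tB a b P = tB a b Q := by
        rw [tB_apply ha hb hab.ne, tB_apply ha hb hab.ne]; exact h
      exact Z.2.2.2.2 ((tB a b).injective e)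
    exact ⟨S2 S.symm hab ha hb h2 h4 h1 h3 hc (fun h => by omega), ht⟩

theorem mkSetup (v : Equiv.Perm ℤ) (hv : ∀ i, v (-i) = - v i) (j : ℕ) :
    Setup v (⇑(sB j * v)) (yv j) ((j : ℤ) + 1) (v⁻¹ (yv j)) (v⁻¹ ((j : ℤ) + 1)) := by
  refine ⟨hv, mul_odd (sB_odd j) hv, fun c d h => fun h' => h (v.injective h'),
    fun c d h => fun h' => h ((sB j * v).injective h'), ?_, by simp, by simp, ?_, ?_, ?_⟩
  · unfold yv
    split_ifs with h
    · left; subst h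
      refine ⟨rfl, by simp, ?_⟩
      rw [inv_odd hv]; simp
    · right; left; omega
  · simp [sB_apply]
  · have := yv_lt j
    simp only [Equiv.Perm.mul_apply, Equiv.Perm.inv_def, Equiv.apply_symm_apply, sB_apply]
    split_ifs <;> omega
  · intro c h1 h2 h3 h4
    have e : ∀ y, c ≠ v⁻¹ y → v c ≠ y := by
      intro y h h'; apply h; rw [← h']; simp
    rw [← inv_odd hv] at h3 h4
    have := e _ h1
    have := e _ h2
    have := e _ h3
    have := e _ h4
    rw [Equiv.Perm.mul_apply, sB_apply]
    split_ifs <;> first | rfl | contradiction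

def Cv (v : Equiv.Perm ℤ) (k x : ℤ) : Prop := Cov v (min k x) (max k x)

theorem tB_minmax (k x : ℤ) : tB (min k x) (max k x) = tB k x := by
  rcases le_total k x with h | h
  · rw [min_eq_left h, max_eq_right h]
  · rw [min_eq_right h, max_eq_left h, tB_comm]

theorem tB_inv {a b : ℤ} (ha : a ≠ 0) (hb : b ≠ 0) (hab : a ≠ b) : (tB a b)⁻¹ = tB a b :=
  inv_eq_of_mul_eq_one_left (tB_mul_self ha hb hab)

theorem odd_zero {v : Equiv.Perm ℤ} (hv : ∀ i, v (-i) = - v i) : v 0 = 0 := by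
  have := hv 0; simp at this; omega

theorem odd_ne {v : Equiv.Perm ℤ} (hv : ∀ i, v (-i) = - v i) {x : ℤ} (hx : x ≠ 0) : v x ≠ 0 := by
  intro h; apply hx; apply v.injective; rw [h, odd_zero hv]

theorem core' (v : Equiv.Perm ℤ) (hv : ∀ i, v (-i) = - v i) (j : ℕ) {k x : ℤ} (hk : k ≠ 0)
    (hx : x ≠ 0) (hkx : x ≠ k) (hne : v x ≠ sB j (v k)) :
    (Cv v k x ∧ LD j (v * tB k x)) ↔ (LD j v ∧ Cv (sB j * v) k x) := by
  have S := mkSetup v hv j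
  have ha : min k x ≠ 0 := by rcases min_choice k x with h | h <;> rw [h] <;> assumption
  have hb : max k x ≠ 0 := by rcases max_choice k x with h | h <;> rw [h] <;> assumption
  have hab : min k x < max k x := by simp; exact hkx
  have hs := sB_apply j (v k)
  have hl := yv_lt j
  have hset : (min k x = k ∧ max k x = x) ∨ (min k x = x ∧ max k x = k) := by omega
  have key : ∀ y z : ℤ, (sB j y = z ∧ sB j z = y) →
      ¬ (min k x = v⁻¹ y ∧ max k x = v⁻¹ z) := by
    rintro y z ⟨hy, hz⟩ ⟨h1, h2⟩
    have e1 : v (min k x) = y := by rw [h1]; simp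
    have e2 : v (max k x) = z := by rw [h2]; simp
    rcases hset with ⟨h3, h4⟩ | ⟨h3, h4⟩ <;> rw [h3] at e1 <;> rw [h4] at e2 <;> apply hne <;>
      rw [e1, e2] <;> simp [hy, hz]
  have s1 : sB j (yv j) = (j : ℤ) + 1 := by rw [sB_apply]; simp
  have s2 : sB j ((j : ℤ) + 1) = yv j := by rw [← s1, sB_sB]
  have s3 : sB j (-yv j) = -((j : ℤ) + 1) := by rw [sB_odd, s1]
  have s4 : sB j (-((j : ℤ) + 1)) = -yv j := by rw [sB_odd, s2]
  have := core S hab ha hb (key _ _ ⟨s1, s2⟩)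
    (by rw [← inv_odd hv, ← inv_odd hv]; exact key _ _ ⟨s4, s3⟩) (key _ _ ⟨s2, s1⟩)
    (by rw [← inv_odd hv, ← inv_odd hv]; exact key _ _ ⟨s3, s4⟩)
  have e : LD j (v * tB k x) ↔ tf (min k x) (max k x) (v⁻¹ ((j : ℤ) + 1)) <
      tf (min k x) (max k x) (v⁻¹ (yv j)) := by
    unfold LD
    rw [mul_inv_rev, tB_inv hk hx (Ne.symm hkx), Equiv.Perm.mul_apply, Equiv.Perm.mul_apply, ← tB_minmax,
      tB_apply ha hb hab.ne, tB_apply ha hb hab.ne]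
    rfl
  rw [e]
  exact this

theorem tB_sB (j : ℕ) {y : ℤ} (hy : y ≠ 0) (h : sB j y ≠ y) : tB y (sB j y) = sB j := by
  have hsy : sB j y ≠ 0 := odd_ne (sB_odd j) hy
  ext x
  rw [tB_apply hy hsy h.symm]
  rw [sB_apply j y, sB_apply j x] at *
  have := yv_lt j
  have := yv_ne j
  split_ifs at * <;> omega

def dl (j : ℕ) (u : ℤ) : ℤ := if u = yv j ∨ u = -((j : ℤ) + 1) then 1
  else if u = (j : ℤ) + 1 ∨ u = - yv j then -1 else 0

def ep (k x : ℤ) : ℤ := if k < x then 1 else -1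

theorem Cov_adj {f g : ℤ → ℤ} {y z P Q : ℤ} (S : Setup f g y z P Q) (h : P < Q) : Cov f P Q := by
  refine ⟨by rw [S.hP, S.hQ]; have := S.hyz; omega, fun c h1 h2 h3 => ?_⟩
  by_cases hc : c = 0
  · subst hc
    have := S.zero.1
    have := S.hyz
    rw [S.hP, S.hQ]; omega
  · exact adj S c hc

theorem eqcase (v : Equiv.Perm ℤ) (hv : ∀ i, v (-i) = - v i) (j : ℕ) {k x : ℤ} (hk : k ≠ 0)
    (hkx : x ≠ k) (he : v x = sB j (v k)) :
    v * tB k x = sB j * v ∧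
    ((¬ LD j v ∧ Cv v k x ∧ dl j (v k) = ep k x) ∨
     (LD j v ∧ Cv (sB j * v) k x ∧ dl j (v k) = - ep k x)) := by
  have hvk := odd_ne hv hk
  have hne : sB j (v k) ≠ v k := by
    rw [← he]; exact fun h => hkx (v.injective h)
  refine ⟨by rw [conj_tB v hv, he, tB_sB j hvk hne], ?_⟩
  have S := mkSetup v hv j
  have hl := yv_lt j
  have hy0 := yv_ne j
  have hx' : x = v⁻¹ (sB j (v k)) := by rw [← he]; simp
  have hk' : k = v⁻¹ (v k) := by simp
  have hd := sB_apply j (v k)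
  have s1 : sB j (yv j) = (j : ℤ) + 1 := by rw [sB_apply]; simp
  have s2 : sB j ((j : ℤ) + 1) = yv j := by rw [← s1, sB_sB]
  have s3 : sB j (-yv j) = -((j : ℤ) + 1) := by rw [sB_odd, s1]
  have s4 : sB j (-((j : ℤ) + 1)) = -yv j := by rw [sB_odd, s2]
  have cases4 : v k = yv j ∨ v k = (j : ℤ) + 1 ∨ v k = - yv j ∨ v k = -((j : ℤ) + 1) := by
    split_ifs at hd <;> first | omega | (exfalso; exact hne hd)
  have hPQ : v⁻¹ (yv j) ≠ v⁻¹ ((j : ℤ) + 1) := fun h => hl.ne (v⁻¹.injective h)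
  have hyj : yv j = -1 ∧ j = 0 ∨ yv j = j ∧ 1 ≤ j := by unfold yv; split_ifs <;> omega
  unfold LD dl ep Cv
  generalize hP : v⁻¹ (yv j) = P at *
  generalize hQ : v⁻¹ ((j : ℤ) + 1) = Q at *
  have c1 : P < Q → Cov v P Q := Cov_adj S
  have c2 : P < Q → Cov v (-Q) (-P) := fun h => Cov_adj S.neg (by omega)
  have c3 : Q < P → Cov (⇑(sB j * v)) Q P := Cov_adj S.symm
  have c4 : Q < P → Cov (⇑(sB j * v)) (-P) (-Q) := fun h => Cov_adj S.symm.neg (by omega)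
  rcases cases4 with h | h | h | h
  · rw [h, hP] at hk'
    rw [h, s1, hQ] at hx'
    rw [hk', hx']
    rw [← hk', h, hk']
    rcases lt_or_gt_of_ne hPQ with hlt | hlt
    · left; rw [min_eq_left hlt.le, max_eq_right hlt.le]
      exact ⟨by omega, c1 hlt, by simp [hlt]⟩
    · right; rw [min_eq_right hlt.le, max_eq_left hlt.le]
      exact ⟨by omega, c3 hlt, by split_ifs <;> omega⟩
  · rw [h, hQ] at hk'
    rw [h, s2, hP] at hx'
    rw [hk', hx']
    rw [← hk', h, hk']
    rcases lt_or_gt_of_ne hPQ with hlt | hlt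
    · left; rw [min_eq_right hlt.le, max_eq_left hlt.le]
      exact ⟨by omega, c1 hlt, by split_ifs <;> omega⟩
    · right; rw [min_eq_left hlt.le, max_eq_right hlt.le]
      exact ⟨by omega, c3 hlt, by split_ifs <;> omega⟩
  · rw [h, inv_odd hv, hP] at hk'
    rw [h, s3, inv_odd hv, hQ] at hx'
    rw [hk', hx']
    rw [← hk', h, hk']
    rcases lt_or_gt_of_ne hPQ with hlt | hlt
    · left; rw [min_eq_right (by omega), max_eq_left (by omega)]
      exact ⟨by omega, c2 hlt, by split_ifs <;> omega⟩
    · right; rw [min_eq_left (by omega), max_eq_right (by omega)]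
      exact ⟨by omega, c4 hlt, by split_ifs <;> omega⟩
  · rw [h, inv_odd hv, hQ] at hk'
    rw [h, s4, inv_odd hv, hP] at hx'
    rw [hk', hx']
    rw [← hk', h, hk']
    rcases lt_or_gt_of_ne hPQ with hlt | hlt
    · left; rw [min_eq_left (by omega), max_eq_right (by omega)]
      exact ⟨by omega, c2 hlt, by split_ifs <;> omega⟩
    · right; rw [min_eq_right (by omega), max_eq_left (by omega)]
      exact ⟨by omega, c4 hlt, by split_ifs <;> omega⟩

theorem dl_fix (j : ℕ) (u : ℤ) (h : sB j u = u) : dl j u = 0 := by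
  have := yv_lt j
  have := yv_ne j
  rw [sB_apply] at h
  unfold dl
  split_ifs at * <;> omega

theorem dl_sum (N : ℕ) (u : ℤ) (hu : u ≠ 0) (h : |u| < N) :
    ∑ j ∈ Finset.range N, dl j u = 0 := by
  let c : ℕ → ℤ := fun j => if u = j then 1 else if u = -j then -1 else 0
  have e : ∀ j ∈ Finset.range N, dl j u = c j - c (j + 1) := by
    intro j _
    simp only [c]
    unfold dl yv
    push_cast
    split_ifs <;> omega
  rw [Finset.sum_congr rfl e, Finset.sum_range_sub']
  simp only [c]
  rw [abs_lt] at h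
  split_ifs <;> omega

theorem signed_abs {n : ℕ} {v : Equiv.Perm ℤ} (hv : IsSignedPerm n v) {x : ℤ} (hx : |x| ≤ n) :
    |v x| ≤ n := by
  by_contra h
  have := hv.2 (v x) (by omega)
  have := v.injective this
  rw [this] at h
  exact h hx

theorem signed_mono {n m : ℕ} (h : n ≤ m) {v : Equiv.Perm ℤ} (hv : IsSignedPerm n v) :
    IsSignedPerm m v := ⟨hv.1, fun i hi => hv.2 i (by omega)⟩

open Classical in
theorem xterm (v : Equiv.Perm ℤ) (hv : ∀ i, v (-i) = - v i) (j N m : ℕ) {k x : ℤ} (hk : k ≠ 0)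
    (hx : x ≠ 0) (hkx : x ≠ k) :
    (if Cv v k x ∧ LD j (v * tB k x) then ep k x * (F N m (sB j * (v * tB k x)) : ℤ) else 0) =
    (if LD j v ∧ Cv (sB j * v) k x then ep k x * (F N m (sB j * v * tB k x) : ℤ) else 0) +
    (if v x = sB j (v k) then dl j (v k) * (F N m v : ℤ) else 0) := by
  by_cases he : v x = sB j (v k)
  · obtain ⟨h1, h2⟩ := eqcase v hv j hk hkx he
    rw [if_pos he, mul_assoc (sB j), h1, LD_mul, ← mul_assoc (sB j), sB_mul_self, one_mul]
    rcases h2 with ⟨a, b, c⟩ | ⟨a, b, c⟩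
    · rw [if_pos ⟨b, a⟩, if_neg (fun h => a h.1), c]; ring
    · rw [if_neg (fun h => h.2 a), if_pos ⟨a, b⟩, c]; ring
  · rw [if_neg he, add_zero, mul_assoc]
    have := core' v hv j hk hx hkx he
    by_cases h : Cv v k x ∧ LD j (v * tB k x)
    · rw [if_pos h, if_pos (this.1 h)]
    · rw [if_neg h, if_neg (fun h' => h (this.2 h'))]

noncomputable def XS (N : ℕ) (k : ℤ) : Finset ℤ :=
  (Finset.Icc (-(N : ℤ)) N).filter fun x => x ≠ 0 ∧ x ≠ k

open Classical in
theorem transition (M : ℕ) (k : ℤ) (hk : k ≠ 0) (hkM : |k| ≤ M) (m : ℕ) :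
    ∀ v : Equiv.Perm ℤ, IsSignedPerm M v →
    ∑ x ∈ XS (M + 1) k, (if Cv v k x then ep k x * (F (M + 1) m (v * tB k x) : ℤ) else 0) = 0 := by
  induction m with
  | zero =>
    intro v hv
    apply Finset.sum_eq_zero
    intro x hx
    simp only [XS, Finset.mem_filter] at hx
    split_ifs with h
    · have : v * tB k x ≠ 1 := by
        intro h1
        have h2 : v = tB k x := by
          rw [← tB_inv hk hx.2.1 (Ne.symm hx.2.2)]; exact eq_inv_of_mul_eq_one_left h1
        have h3 := h.1
        have ha : min k x ≠ 0 := by omega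
        have hb : max k x ≠ 0 := by omega
        have hab : min k x < max k x := by omega
        rw [h2, ← tB_minmax, tB_apply ha hb hab.ne, tB_apply ha hb hab.ne] at h3
        simp at h3
        split_ifs at h3 <;> omega
      simp [F, this]
    · rfl
  | succ m ih =>
    intro v hv
    have hvk := odd_ne hv.1 hk
    have hvM := signed_abs hv hkM
    have e1 : ∀ x ∈ XS (M + 1) k,
        (if Cv v k x then ep k x * (F (M + 1) (m + 1) (v * tB k x) : ℤ) else 0) =
        ∑ j ∈ Finset.range (M + 1),
          ((if LD j v ∧ Cv (sB j * v) k x then ep k x * (F (M + 1) m (sB j * v * tB k x) : ℤ) else 0) +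
          (if v x = sB j (v k) then dl j (v k) * (F (M + 1) m v : ℤ) else 0)) := by
      intro x hx
      simp only [XS, Finset.mem_filter] at hx
      rw [Finset.sum_congr rfl (fun j _ => (xterm v hv.1 j (M + 1) m hk hx.2.1 hx.2.2).symm)]
      by_cases h : Cv v k x
      · simp only [h, if_true, true_and, F]
        push_cast
        rw [Finset.mul_sum]
        apply Finset.sum_congr rfl
        intro j _
        split_ifs <;> simp
      · simp [h]
    rw [Finset.sum_congr rfl e1, Finset.sum_comm]
    have e2 : ∀ j ∈ Finset.range (M + 1), ∑ x ∈ XS (M + 1) k,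
          ((if LD j v ∧ Cv (sB j * v) k x then ep k x * (F (M + 1) m (sB j * v * tB k x) : ℤ) else 0) +
          (if v x = sB j (v k) then dl j (v k) * (F (M + 1) m v : ℤ) else 0)) =
          dl j (v k) * (F (M + 1) m v : ℤ) := by
      intro j hj
      rw [Finset.mem_range] at hj
      rw [Finset.sum_add_distrib]
      have f1 : ∑ x ∈ XS (M + 1) k, (if LD j v ∧ Cv (sB j * v) k x then
          ep k x * (F (M + 1) m (sB j * v * tB k x) : ℤ) else 0) = 0 := by
        by_cases h : LD j v
        · simp only [h, true_and]
          exact ih _ (signed_mul (signed_sB (LD_lt hv h)) hv)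
        · simp [h]
      rw [f1, zero_add]
      by_cases hfix : sB j (v k) = v k
      · rw [dl_fix j _ hfix]; simp
      · rw [Finset.sum_eq_single (v⁻¹ (sB j (v k)))]
        · rw [if_pos (by simp)]
        · intro b _ hb
          rw [if_neg]
          intro h; apply hb; rw [← h]; simp
        · intro hn
          exfalso; apply hn
          have hv' := signed_mono (Nat.le_succ M) (signed_inv hv)
          have a1 : |sB j (v k)| ≤ ((M + 1 : ℕ) : ℤ) := signed_abs (signed_sB hj) (by push_cast; omega)
          have a2 := signed_abs hv' a1
          simp only [XS, Finset.mem_filter, Finset.mem_Icc]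
          refine ⟨abs_le.1 a2, odd_ne hv'.1 (odd_ne (sB_odd j) hvk), ?_⟩
          intro h
          apply hfix
          rw [Equiv.Perm.inv_eq_iff_eq] at h
          exact h
    rw [Finset.sum_congr rfl e2, ← Finset.sum_mul, dl_sum _ _ hvk (by push_cast; omega), zero_mul]

structure St (M : ℕ) (w : Equiv.Perm ℤ) (g : ℤ → ℤ) : Prop where
  sg : IsSignedPerm M w
  inc : ∀ i j, 0 < i → i < j → 0 < w i → 0 < w j → w i < w j
  ng : ∀ c, 0 < c → g c < 0 → w c = g c
  ps : ∀ c, 0 < c → 0 ≤ g c → 0 < w c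

theorem sB_pos (b : ℕ) (hb : 1 ≤ b) (x : ℤ) : sB b x = if x = b then (b : ℤ) + 1 else
    if x = (b : ℤ) + 1 then (b : ℤ) else if x = -b then -((b : ℤ) + 1) else
    if x = -((b : ℤ) + 1) then -(b : ℤ) else x := by
  rw [sB_apply]
  have : yv b = b := by unfold yv; rw [if_neg (by omega)]
  rw [this]

theorem step (M : ℕ) (w : Equiv.Perm ℤ) (g g' : ℤ → ℤ) (H : St M w g) (k s : ℤ) (b : ℕ)
    (hk : 1 ≤ k) (hks : k < s) (hsM : s ≤ M) (hb : 1 ≤ b) (hbM : b < M)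
    (gs : g s = -b) (gk : - (b : ℤ) < g k)
    (g1 : ∀ c, k < c → c < s → g c < -b)
    (g2 : ∀ c, s < c → 0 ≤ g c ∨ (g k < g c ∧ g k < 0))
    (g3 : ∀ c, 1 ≤ c → c < k → -(b : ℤ) ≤ g c)
    (g4 : ∀ c, 1 ≤ c → g c ≠ -((b : ℤ) + 1))
    (e1 : g' k = -((b : ℤ) + 1)) (e2 : g' s = g k) (e3 : ∀ c, c ≠ k → c ≠ s → g' c = g c) :
    ∃ w', St M w' g' ∧ ∀ m, F (M + 1) m w = F (M + 1) m w' := by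
  obtain ⟨v, hvdef⟩ : ∃ v, v = w * tB k s := ⟨_, rfl⟩
  have k0 : k ≠ 0 := by omega
  have s0 : s ≠ 0 := by omega
  have ws : w s = -b := by rw [H.ng s (by omega) (by omega), gs]
  have vk : v k = -b := by
    rw [hvdef, Equiv.Perm.mul_apply, tB_apply k0 s0 hks.ne, if_pos rfl, ws]
  have vs : v s = w k := by
    rw [hvdef, Equiv.Perm.mul_apply, tB_apply k0 s0 hks.ne, if_neg (by omega), if_pos rfl]
  have vc : ∀ c, 0 < c → c ≠ k → c ≠ s → v c = w c := by
    intro c hc h1 h2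
    rw [hvdef, Equiv.Perm.mul_apply, tB_apply k0 s0 hks.ne, if_neg h1, if_neg h2, if_neg (by omega),
      if_neg (by omega)]
  have wk : -(b : ℤ) < w k ∧ (g k < 0 → w k = g k) ∧ (0 ≤ g k → 0 < w k) := by
    have := H.ng k (by omega)
    have := H.ps k (by omega)
    refine ⟨?_, by assumption, by assumption⟩
    by_cases h : g k < 0 <;> omega
  have sv : IsSignedPerm M v := by
    rw [hvdef]
    apply signed_mul H.sg
    apply signed_tB k0 s0 hks.ne
    · rw [abs_le]; omega
    · rw [abs_le]; omega
  have odd := sv.1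
  have hng : ∀ c, 0 < c → (g c < 0 ∧ w c = g c) ∨ (0 ≤ g c ∧ 0 < w c) := by
    intro c hc
    have := H.ng c hc
    have := H.ps c hc
    by_cases h : g c < 0
    · left; exact ⟨h, by omega⟩
    · right; omega
  have vinc : ∀ i j, 0 < i → i < j → 0 < v i → 0 < v j → v i < v j := by
    intro i j hi hij h1 h2
    have ik : i ≠ k := by rintro rfl; omega
    have jk : j ≠ k := by rintro rfl; omega
    by_cases is : i = s
    · subst is
      rw [vs] at h1 ⊢
      rw [vc j (by omega) jk (by omega)] at h2 ⊢
      exact H.inc _ _ (by omega) (by omega) h1 h2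
    · rw [vc i hi ik is] at h1 ⊢
      by_cases js : j = s
      · subst js
        rw [vs] at h2 ⊢
        have := hng i hi
        have := g1 i
        exact H.inc _ _ hi (by omega) h1 h2
      · rw [vc j (by omega) jk js] at h2 ⊢
        exact H.inc _ _ hi hij h1 h2
  obtain ⟨q, hq⟩ : ∃ q, v q = (b : ℤ) + 1 := ⟨v⁻¹ ((b : ℤ) + 1), by simp⟩
  have hqM : |q| ≤ M := by
    by_contra h
    have := sv.2 q (by omega)
    rw [hq] at this
    rw [← this, abs_of_nonneg (by omega)] at h
    omega
  have vneg : ∀ c, 0 < c → v c ≠ -((b : ℤ) + 1) := by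
    intro c hc h
    by_cases ck : c = k
    · subst ck; omega
    by_cases cs : c = s
    · subst cs; omega
    · rw [vc c hc ck cs] at h
      have := g4 c (by omega)
      have := hng c hc
      omega
  have q0 : 0 < q := by
    by_contra h
    rcases eq_or_ne q 0 with h0 | h0
    · rw [h0, odd_zero odd] at hq; omega
    · apply vneg (-q) (by omega)
      rw [odd, hq]
  have vq : v (-q) = -((b : ℤ) + 1) := by rw [odd, hq]
  refine ⟨sB b * v, ⟨signed_mul (signed_sB hbM) sv, ?_, ?_, ?_⟩, ?_⟩
  · intro i j hi hij
    have nb : ∀ i, 0 < i → v i ≠ b := by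
      intro i hi h
      have : v i = v (-k) := by rw [odd, vk, h]; simp
      have := v.injective this
      omega
    have h1 := vinc i j hi hij
    have h2 := nb i hi
    have h3 := nb j (by omega)
    rw [Equiv.Perm.mul_apply, Equiv.Perm.mul_apply, sB_pos b hb, sB_pos b hb]
    split_ifs <;> omega
  · intro c hc hgc
    rw [Equiv.Perm.mul_apply, sB_pos b hb]
    by_cases ck : c = k
    · rw [ck, vk, e1]; split_ifs <;> omega
    by_cases cs : c = s
    · rw [cs] at hgc ⊢
      rw [vs, e2]; rw [e2] at hgc
      have := wk.2.1 hgc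
      split_ifs <;> omega
    · have h1 := e3 c ck cs
      have h2 := vc c hc ck cs
      have h3 := hng c hc
      have h4 := g4 c (by omega)
      have h5 : w c ≠ w s := fun h => cs (w.injective h)
      split_ifs <;> omega
  · intro c hc hgc
    rw [Equiv.Perm.mul_apply, sB_pos b hb]
    by_cases ck : c = k
    · rw [ck] at hgc; omega
    by_cases cs : c = s
    · rw [cs] at hgc ⊢
      rw [vs]; rw [e2] at hgc
      have := wk.2.2 hgc
      split_ifs <;> omega
    · have h1 := e3 c ck cs
      have h2 := vc c hc ck cs
      have h3 := hng c hc
      split_ifs <;> omega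
  · intro m
    classical
    have T := transition M k k0 (by rw [abs_le]; omega) m v sv
    have hsX : s ∈ XS (M + 1) k := by
      simp only [XS, Finset.mem_filter, Finset.mem_Icc]; push_cast; omega
    have hqX : -q ∈ (XS (M + 1) k).erase s := by
      rw [abs_le] at hqM
      simp only [Finset.mem_erase, XS, Finset.mem_filter, Finset.mem_Icc]; push_cast; omega
    rw [← Finset.add_sum_erase _ _ hsX, ← Finset.add_sum_erase _ _ hqX] at T
    have c1 : Cv v k s := by
      unfold Cv
      rw [min_eq_left hks.le, max_eq_right hks.le]
      refine ⟨by rw [vk, vs]; exact wk.1, fun c h1 h2 _ h3 => ?_⟩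
      rw [vc c (by omega) (by omega) (by omega), vk] at h3
      have := hng c (by omega)
      have := g1 c h1 h2
      omega
    have c2 : Cv v k (-q) := by
      unfold Cv
      rw [min_eq_right (by omega), max_eq_left (by omega)]
      refine ⟨by rw [vk, vq]; omega, fun c h1 h2 _ h3 => ?_⟩
      rw [vk, vq] at h3
      omega
    have c3 : ∀ x ∈ ((XS (M + 1) k).erase s).erase (-q), ¬ Cv v k x := by
      intro x hx hc
      simp only [Finset.mem_erase, XS, Finset.mem_filter] at hx
      obtain ⟨xq, xs, -, x0, xk⟩ := hx
      unfold Cv at hc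
      rcases lt_or_gt_of_ne xk with hlt | hlt
      · rw [min_eq_right hlt.le, max_eq_left hlt.le] at hc
        have hc1 := hc.1
        rw [vk] at hc1
        rcases lt_or_gt_of_ne xq with h | h
        · apply hc.2 (-q) h (by omega) (by omega)
          rw [vk, vq]
          have : v x ≠ v (-q) := fun h' => xq (v.injective h')
          omega
        · rcases lt_or_gt_of_ne x0 with hx0 | hx0
          · have := vinc (-x) q (by omega) (by omega)
            rw [odd] at this
            omega
          · rw [vc x hx0 xk xs] at hc1
            have := hng x hx0
            have := g3 x (by omega) hlt
            omega
      · rw [min_eq_left hlt.le, max_eq_right hlt.le] at hc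
        have hc1 := hc.1
        rw [vk, vc x (by omega) xk xs] at hc1
        have h1 := hng x (by omega)
        rcases lt_or_gt_of_ne xs with h | h
        · have := g1 x hlt h
          omega
        · apply hc.2 s hks h (by omega)
          rw [vk, vs, vc x (by omega) xk xs]
          refine ⟨wk.1, ?_⟩
          have h2 := g2 x h
          have h3 := H.inc k x (by omega) hlt
          obtain ⟨a1, a2, a3⟩ := wk
          by_cases h : g k < 0 <;> omega
    rw [Finset.sum_eq_zero (fun x hx => if_neg (c3 x hx)), if_pos c1, if_pos c2] at T
    have t1 : v * tB k s = w := by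
      rw [hvdef, mul_assoc, tB_mul_self k0 s0 hks.ne, mul_one]
    have t2 : v * tB k (-q) = sB b * v := by
      rw [conj_tB v odd, vk, vq, tB_neg (by omega) (by omega) (by omega), sB_eq_tB]
      have : yv b = b := by unfold yv; rw [if_neg (by omega)]
      rw [this]
    rw [t1, t2] at T
    unfold ep at T
    rw [if_pos hks, if_neg (by omega)] at T
    omega

def hh (r c : ℤ) : ℤ := if c ≤ r then 0 else -(c - r)

def gst (r k m y j c : ℤ) : ℤ :=
  if c < k then hh r c
  else if c = k then (if j = 0 then hh r k else -(y + 2 * j))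
  else if c ≤ k + m - j then -(y + 2 * (m - (c - k)) + 1)
  else if c < k + m then -(y + 2 * (m - (c - k)))
  else if c = k + m then hh r k
  else 0

theorem St_congr {M : ℕ} {w : Equiv.Perm ℤ} {g g' : ℤ → ℤ} (h : St M w g)
    (e : ∀ c, 0 < c → g c = g' c) : St M w g' :=
  ⟨h.sg, h.inc, fun c hc h' => by rw [← e c hc] at h' ⊢; exact h.ng c hc h',
    fun c hc h' => by rw [← e c hc] at h'; exact h.ps c hc h'⟩

set_option maxHeartbeats 4000000 in
theorem pass (M : ℕ) (w : Equiv.Perm ℤ) (r k m y : ℤ) (hr : 0 ≤ r) (hk : 1 ≤ k) (hy : 0 ≤ y)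
    (hkr : k ≤ r + y) (hkm : k + m ≤ M) (hym : y + 2 * m ≤ M)
    (H : St M w (gst r k m y 0)) (j : ℕ) : (j : ℤ) ≤ m →
    ∃ w', St M w' (gst r k m y j) ∧ ∀ n, F (M + 1) n w = F (M + 1) n w' := by
  induction j with
  | zero => intro _; exact ⟨w, H, fun _ => rfl⟩
  | succ j ih =>
    intro hj
    push_cast at hj
    obtain ⟨w1, H1, E1⟩ := ih (by omega)
    obtain ⟨b, hb⟩ : ∃ b : ℕ, (b : ℤ) = y + 2 * j + 1 := ⟨(y + 2 * j + 1).toNat, by omega⟩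
    have : ∃ w', St M w' (gst r k m y ((j + 1 : ℕ) : ℤ)) ∧ ∀ n, F (M + 1) n w1 = F (M + 1) n w' := by
      apply step M w1 _ _ H1 k (k + m - j) b hk (by omega) (by omega) (by omega) (by omega)
      · unfold gst; split_ifs <;> omega
      · unfold gst hh; split_ifs <;> omega
      · intro c h1 h2; unfold gst; split_ifs <;> omega
      · intro c h1; unfold gst hh; split_ifs <;> omega
      · intro c h1 h2; unfold gst hh; split_ifs <;> omega
      · intro c h1; unfold gst hh; split_ifs <;> omega
      · unfold gst; push_cast; split_ifs <;> omega
      · unfold gst; push_cast; split_ifs <;> omega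
      · intro c h1 h2; unfold gst; push_cast; split_ifs <;> omega
    obtain ⟨w2, H2, E2⟩ := this
    exact ⟨w2, H2, fun n => (E1 n).trans (E2 n)⟩

theorem phase1 (M d r : ℕ) (hM : r + 3 * d + 10 = M) (w : Equiv.Perm ℤ)
    (H : St M w (gst r (r + d) 0 d 0)) (m : ℕ) : m ≤ d →
    ∃ w', St M w' (gst r ((r : ℤ) + d - m) m ((d : ℤ) - m) 0) ∧
      ∀ n, F (M + 1) n w = F (M + 1) n w' := by
  induction m with
  | zero => intro _; exact ⟨w, by simpa using H, fun _ => rfl⟩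
  | succ m ih =>
    intro hm
    obtain ⟨w1, H1, E1⟩ := ih (by omega)
    obtain ⟨w2, H2, E2⟩ := pass M w1 r _ m _ (by omega) (by omega) (by omega) (by omega) (by omega)
      (by omega) H1 m le_rfl
    refine ⟨w2, St_congr H2 ?_, fun n => (E1 n).trans (E2 n)⟩
    intro c hc
    unfold gst hh
    push_cast
    split_ifs <;> omega

theorem phase2 (M d r : ℕ) (hd : 1 ≤ d) (hM : r + 3 * d + 10 = M) (w : Equiv.Perm ℤ)
    (H : St M w (gst r r d 0 0)) (p : ℕ) : p ≤ r →
    ∃ w', St M w' (gst r ((r : ℤ) - p) d p 0) ∧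
      ∀ n, F (M + 1) n w = F (M + 1) n w' := by
  induction p with
  | zero => intro _; exact ⟨w, by simpa using H, fun _ => rfl⟩
  | succ p ih =>
    intro hm
    obtain ⟨w1, H1, E1⟩ := ih (by omega)
    obtain ⟨w2, H2, E2⟩ := pass M w1 r _ d _ (by omega) (by omega) (by omega) (by omega) (by omega)
      (by omega) H1 d le_rfl
    refine ⟨w2, St_congr H2 ?_, fun n => (E1 n).trans (E2 n)⟩
    intro c hc
    unfold gst hh
    push_cast
    split_ifs <;> omega

theorem path (d r : ℕ) (hd : 1 ≤ d) (w : Equiv.Perm ℤ) (hw : IsWdr d r w) :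
    ∃ w', St (r + 3 * d + 10) w' (fun c => if c ≤ d then -((r : ℤ) + 2 * (d - c) + 1) else 0) ∧
      ∀ n, F (r + 3 * d + 10 + 1) n w = F (r + 3 * d + 10 + 1) n w' := by
  obtain ⟨sg, h1, h2⟩ := hw
  have h3 : ∀ c : ℤ, (d : ℤ) + r < c → w c = c := by
    intro c hc
    apply sg.2
    rw [abs_of_nonneg (by omega)]; push_cast; omega
  have H0 : St (r + 3 * d + 10) w (gst r (r + d) 0 d 0) := by
    refine ⟨signed_mono (by omega) sg, ?_, ?_, ?_⟩
    · intro i j hi hij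
      have := h1 i; have := h2 i; have := h3 i
      have := h1 j; have := h2 j; have := h3 j
      omega
    · intro c hc
      have := h2 c; have := h3 c
      unfold gst hh
      split_ifs <;> omega
    · intro c hc
      have := h1 c; have := h3 c
      unfold gst hh
      split_ifs <;> omega
  obtain ⟨w1, H1, E1⟩ := phase1 _ d r rfl w H0 d le_rfl
  obtain ⟨w2, H2, E2⟩ := phase2 _ d r hd rfl w1 (by simpa using H1) r le_rfl
  refine ⟨w2, St_congr H2 ?_, fun n => (E1 n).trans (E2 n)⟩
  intro c hc
  unfold gst hh
  split_ifs <;> omega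

def WS (d : ℕ) (lam : ℕ → ℕ) : Prop :=
  ∀ i j, 1 ≤ i → i < j → j ≤ d → lam j < lam i ∨ (lam i = 0 ∧ lam j = 0)

def dec (lam : ℕ → ℕ) (i : ℕ) : ℕ → ℕ := fun t => if t = i then lam i - 1 else lam t

theorem WS_gap {d : ℕ} {lam : ℕ → ℕ} (h : WS d lam) (i t : ℕ) (hi : 1 ≤ i) : i + t ≤ d →
    lam (i + t) + t ≤ lam i ∨ lam (i + t) = 0 := by
  induction t with
  | zero => intro _; simp
  | succ t ih =>
    intro hd
    have := ih (by omega)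
    have := h (i + t) (i + (t + 1)) (by omega) (by omega) hd
    omega

def bx (d : ℕ) (lam : ℕ → ℕ) (i : ℕ) : ℤ × ℤ := ((i : ℤ), (lam i : ℤ) + i - d - 1)

theorem mem_Diagram {d : ℕ} {lam : ℕ → ℕ} {p : ℤ × ℤ} : p ∈ Diagram d lam ↔
    ∃ i : ℕ, 1 ≤ i ∧ i ≤ d ∧ p.1 = i ∧ (i : ℤ) - d ≤ p.2 ∧ p.2 + d + 1 ≤ (lam i : ℤ) + i := by
  unfold Diagram
  simp only [Set.mem_ofPred_eq]
  constructor
  · rintro ⟨h1, h2, h3, h4⟩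
    refine ⟨p.1.toNat, by omega, by omega, by omega, by omega, by omega⟩
  · rintro ⟨i, h1, h2, h3, h4, h5⟩
    rw [h3]
    simp only [Int.toNat_natCast]
    omega

theorem bx_mem {d : ℕ} {lam : ℕ → ℕ} {i : ℕ} (h1 : 1 ≤ i) (h2 : i ≤ d) (h3 : 1 ≤ lam i) :
    bx d lam i ∈ Diagram d lam := by
  rw [mem_Diagram]
  refine ⟨i, h1, h2, rfl, ?_, ?_⟩ <;> simp only [bx] <;> omega

theorem bx_notMem {d : ℕ} {lam : ℕ → ℕ} {i : ℕ} (h3 : 1 ≤ lam i) :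
    bx d lam i ∉ Diagram d (dec lam i) := by
  rw [mem_Diagram]
  rintro ⟨t, h4, h5, h6, h7, h8⟩
  simp only [bx] at h6 h7 h8
  have : t = i := by omega
  subst this
  simp only [dec, if_true] at h8
  omega

theorem Diagram_dec {d : ℕ} {lam : ℕ → ℕ} {i : ℕ} (h1 : 1 ≤ i) (h2 : i ≤ d) (h3 : 1 ≤ lam i) :
    Diagram d lam = insert (bx d lam i) (Diagram d (dec lam i)) := by
  ext p
  rw [Set.mem_insert_iff]
  constructor
  · intro hp
    by_cases hb : p = bx d lam i
    · exact Or.inl hb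
    · right
      rw [mem_Diagram] at hp ⊢
      obtain ⟨t, h4, h5, h6, h7, h8⟩ := hp
      refine ⟨t, h4, h5, h6, h7, ?_⟩
      unfold dec
      split_ifs with h
      · subst h
        have : p.2 ≠ (lam t : ℤ) + t - d - 1 := by
          intro h'; apply hb; exact Prod.ext h6 h'
        omega
      · exact h8
  · rintro (rfl | hp)
    · exact bx_mem h1 h2 h3
    · rw [mem_Diagram] at hp ⊢
      obtain ⟨t, h4, h5, h6, h7, h8⟩ := hp
      refine ⟨t, h4, h5, h6, h7, ?_⟩
      unfold dec at h8
      split_ifs at h8 with h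
      · subst h; omega
      · exact h8

theorem sizeP_dec {d : ℕ} {lam : ℕ → ℕ} {i : ℕ} (h1 : 1 ≤ i) (h2 : i ≤ d) (h3 : 1 ≤ lam i) :
    sizeP d lam = sizeP d (dec lam i) + 1 := by
  unfold sizeP
  have hi : i ∈ Finset.Icc 1 d := Finset.mem_Icc.2 ⟨h1, h2⟩
  rw [← Finset.add_sum_erase _ _ hi, ← Finset.add_sum_erase _ _ hi]
  have : ∑ x ∈ (Finset.Icc 1 d).erase i, dec lam i x = ∑ x ∈ (Finset.Icc 1 d).erase i, lam x := by
    apply Finset.sum_congr rfl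
    intro x hx
    rw [Finset.mem_erase] at hx
    simp [dec, hx.1]
  rw [this]
  simp only [dec, if_true]
  omega

def Rem (d : ℕ) (lam : ℕ → ℕ) (i : ℕ) : Prop := 1 ≤ i ∧ i ≤ d ∧ 1 ≤ lam i ∧ WS d (dec lam i)

theorem SYT_le {d : ℕ} {lam : ℕ → ℕ} {B : ℤ × ℤ → ℕ} (h : IsSYT d lam B) (p : ℤ × ℤ) :
    B p ≤ sizeP d lam := by
  by_cases hp : p ∈ Diagram d lam
  · exact (h.1.1.mapsTo hp).2
  · rw [h.1.2 p hp]; omega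

open Classical in
theorem SYT_add {d : ℕ} {lam : ℕ → ℕ} {i : ℕ} (h : Rem d lam i) {B : ℤ × ℤ → ℕ}
    (hB : IsSYT d (dec lam i) B) :
    IsSYT d lam (Function.update B (bx d lam i) (sizeP d lam)) := by
  obtain ⟨h1, h2, h3, h4⟩ := h
  have hn := bx_notMem (d := d) h3
  have hs := sizeP_dec h1 h2 h3
  have hD := Diagram_dec h1 h2 h3
  have hne : ∀ p ∈ Diagram d (dec lam i), p ≠ bx d lam i := by
    rintro p hp rfl; exact hn hp
  refine ⟨⟨?_, ?_⟩, ?_⟩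
  · rw [hD]
    have e : Set.Icc 1 (sizeP d lam) =
      insert ((Function.update B (bx d lam i) (sizeP d lam)) (bx d lam i)) (Set.Icc 1 (sizeP d (dec lam i))) := by
      ext x
      simp only [Function.update_self, Set.mem_insert_iff, Set.mem_Icc]
      omega
    rw [e]
    apply Set.BijOn.insert
    · apply hB.1.1.congr
      intro p hp
      rw [Function.update_of_ne (hne p hp)]
    · simp only [Function.update_self, Set.mem_Icc]
      omega
  · intro p hp
    rw [hD, Set.mem_insert_iff, not_or] at hp
    rw [Function.update_of_ne hp.1, hB.1.2 p hp.2]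
  · intro p hp q hq
    rw [hD, Set.mem_insert_iff] at hp hq
    rcases hp with rfl | hp
    · rcases hq with rfl | hq
      · constructor <;> rintro ⟨_, h⟩ <;> omega
      · rw [mem_Diagram] at hq
        obtain ⟨t, a1, a2, a3, a4, a5⟩ := hq
        constructor
        · rintro ⟨b1, b2⟩
          simp only [bx] at b1 b2
          have : t = i := by omega
          subst this
          simp only [dec, if_true] at a5
          omega
        · rintro ⟨b1, b2⟩
          simp only [bx] at b1 b2
          have := WS_gap h4 i (t - i) h1 (by omega)
          rw [show i + (t - i) = t by omega] at this
          simp only [dec, if_true] at a5 this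
          rw [if_neg (by omega)] at a5 this
          omega
    · rw [Function.update_of_ne (hne p hp)]
      rcases hq with rfl | hq
      · rw [Function.update_self]
        have := SYT_le hB p
        constructor <;> intro _ <;> omega
      · rw [Function.update_of_ne (hne q hq)]
        exact hB.2 p hp q hq

open Classical in
theorem SYT_remove {d : ℕ} {lam : ℕ → ℕ} (hws : WS d lam) {B : ℤ × ℤ → ℕ}
    (hB : IsSYT d lam B) (hpos : 1 ≤ sizeP d lam) :
    ∃ i, Rem d lam i ∧ ∃ B', IsSYT d (dec lam i) B' ∧
      Function.update B' (bx d lam i) (sizeP d lam) = B := by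
  obtain ⟨p, hp, hpn⟩ := hB.1.1.surjOn (show sizeP d lam ∈ Set.Icc 1 (sizeP d lam) from ⟨hpos, le_rfl⟩)
  have hp' := hp
  rw [mem_Diagram] at hp'
  obtain ⟨i, h1, h2, h3, h4, h5⟩ := hp'
  have hrow : (p.1, p.2 + 1) ∉ Diagram d lam := by
    intro hq
    have := (hB.2 p hp _ hq).1 ⟨rfl, by simp⟩
    have := SYT_le hB (p.1, p.2 + 1)
    omega
  have hcol : (p.1 + 1, p.2) ∉ Diagram d lam := by
    intro hq
    have := (hB.2 p hp _ hq).2 ⟨rfl, by simp⟩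
    have := SYT_le hB (p.1 + 1, p.2)
    omega
  rw [mem_Diagram] at hrow hcol
  have e2 : p.2 = (lam i : ℤ) + i - d - 1 := by
    by_contra hne
    exact hrow ⟨i, h1, h2, h3, by simp only; omega, by simp only; omega⟩
  have hpb : p = bx d lam i := Prod.ext h3 e2
  have hl : 1 ≤ lam i := by omega
  have hrem : WS d (dec lam i) := by
    intro a b ha hab hb
    have w1 := hws a b ha hab hb
    unfold dec
    split_ifs with c1 c2 c2
    · omega
    · subst c1; omega
    · subst c2
      have hc : ¬ (lam (a + 1) + 1 = lam a ∧ 2 ≤ lam a) := by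
        rintro ⟨x1, x2⟩
        exact hcol ⟨a + 1, by omega, by omega, by simp only [h3]; push_cast; rfl,
          by simp only; push_cast; omega, by simp only; push_cast; omega⟩
      have w2 := hws a (a + 1) ha (by omega) (by omega)
      by_cases hb1 : b = a + 1
      · subst hb1; omega
      · have w3 := hws (a + 1) b (by omega) (by omega) hb
        omega
    · exact w1
  refine ⟨i, ⟨h1, h2, hl, hrem⟩, Function.update B p 0, ?_, ?_⟩
  · have hn := bx_notMem (d := d) hl
    have hs := sizeP_dec h1 h2 hl
    have hD := Diagram_dec h1 h2 hl
    rw [← hpb] at hn hD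
    have hne : ∀ q ∈ Diagram d (dec lam i), q ≠ p := by
      rintro q hq rfl; exact hn hq
    have hsub : ∀ q ∈ Diagram d (dec lam i), q ∈ Diagram d lam := by
      intro q hq; rw [hD]; exact Or.inr hq
    refine ⟨⟨?_, ?_⟩, ?_⟩
    · refine ⟨?_, ?_, ?_⟩
      · intro q hq
        rw [Function.update_of_ne (hne q hq)]
        have a := hB.1.1.mapsTo (hsub q hq)
        have b : B q ≠ B p := fun h => hne q hq (hB.1.1.injOn (hsub q hq) hp h)
        rw [Set.mem_Icc] at a ⊢
        omega
      · intro q hq q' hq' h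
        rw [Function.update_of_ne (hne q hq), Function.update_of_ne (hne q' hq')] at h
        exact hB.1.1.injOn (hsub q hq) (hsub q' hq') h
      · intro x hx
        rw [Set.mem_Icc] at hx
        obtain ⟨q, hq, hqx⟩ := hB.1.1.surjOn (show x ∈ Set.Icc 1 (sizeP d lam) from ⟨hx.1, by omega⟩)
        have hqp : q ≠ p := by rintro rfl; omega
        rw [hD, Set.mem_insert_iff] at hq
        exact ⟨q, hq.resolve_left hqp, by rw [Function.update_of_ne hqp]; exact hqx⟩
    · intro q hq
      by_cases hqp : q = p
      · rw [hqp, Function.update_self]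
      · rw [Function.update_of_ne hqp]
        apply hB.1.2
        rw [hD, Set.mem_insert_iff, not_or]
        exact ⟨hqp, hq⟩
    · intro q hq q' hq'
      rw [Function.update_of_ne (hne q hq), Function.update_of_ne (hne q' hq')]
      exact hB.2 q (hsub q hq) q' (hsub q' hq')
  · rw [← hpb, Function.update_idem, ← hpn, Function.update_eq_self]

open Classical in
theorem SYT_rec {d : ℕ} {lam : ℕ → ℕ} (hws : WS d lam) (hpos : 1 ≤ sizeP d lam)
    (hfin : ∀ i, Rem d lam i → Finite {B // IsSYT d (dec lam i) B}) :
    Finite {B // IsSYT d lam B} ∧ Nat.card {B // IsSYT d lam B} =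
      ∑ i ∈ (Finset.Icc 1 d).filter (Rem d lam), Nat.card {B // IsSYT d (dec lam i) B} := by
  let I := {i // i ∈ (Finset.Icc 1 d).filter (Rem d lam)}
  letI : Fintype I := Finset.fintypeCoeSort _
  have hI : ∀ i : I, Rem d lam i.1 := fun i => (Finset.mem_filter.1 i.2).2
  have : ∀ i : I, Finite {B // IsSYT d (dec lam i.1) B} := fun i => hfin _ (hI i)
  let f : (Σ i : I, {B // IsSYT d (dec lam i.1) B}) → {B // IsSYT d lam B} :=
    fun x => ⟨_, SYT_add (hI x.1) x.2.2⟩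
  have hf : Function.Bijective f := by
    constructor
    · rintro ⟨i, B⟩ ⟨j, B'⟩ h
      have h' : Function.update B.1 (bx d lam i.1) (sizeP d lam) =
        Function.update B'.1 (bx d lam j.1) (sizeP d lam) := congrArg Subtype.val h
      have hij : i = j := by
        by_contra hne
        have hb : bx d lam i.1 ≠ bx d lam j.1 := by
          intro hb
          apply hne
          have := congrArg Prod.fst hb
          simp only [bx] at this
          apply Subtype.ext
          omega
        have := congrFun h' (bx d lam i.1)
        rw [Function.update_self, Function.update_of_ne hb] at this
        have h2 := SYT_le B'.2 (bx d lam i.1)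
        obtain ⟨a1, a2, a3, a4⟩ := hI j
        have := sizeP_dec a1 a2 a3
        omega
      subst hij
      have : B = B' := by
        apply Subtype.ext
        funext p
        by_cases hp : p = bx d lam i.1
        · have hn := bx_notMem (d := d) (hI i).2.2.1
          rw [hp, B.2.1.2 _ hn, B'.2.1.2 _ hn]
        · have := congrFun h' p
          rwa [Function.update_of_ne hp, Function.update_of_ne hp] at this
      rw [this]
    · rintro ⟨B, hB⟩
      obtain ⟨i, hi, B', hB', e⟩ := SYT_remove hws hB hpos
      exact ⟨⟨⟨i, Finset.mem_filter.2 ⟨Finset.mem_Icc.2 ⟨hi.1, hi.2.1⟩, hi⟩⟩, ⟨B', hB'⟩⟩,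
        Subtype.ext e⟩
  refine ⟨Finite.of_surjective f hf.2, ?_⟩
  rw [← Nat.card_congr (Equiv.ofBijective f hf), Nat.card_sigma]
  exact Finset.sum_coe_sort _ (fun i => Nat.card {B // IsSYT d (dec lam i) B})

structure Gr (d N : ℕ) (lam : ℕ → ℕ) (w : Equiv.Perm ℤ) : Prop where
  sg : IsSignedPerm N w
  inc : ∀ a b, 0 < a → a < b → w a < w b
  neg : ∀ x : ℤ, 0 < x → (w⁻¹ x < 0 ↔ ∃ i : ℕ, 1 ≤ i ∧ i ≤ d ∧ (lam i : ℤ) = x)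

theorem WS_inj {d : ℕ} {lam : ℕ → ℕ} (h : WS d lam) {i j : ℕ} (hi : 1 ≤ i) (hj : 1 ≤ j)
    (hid : i ≤ d) (hjd : j ≤ d) (e : lam i = lam j) (hp : 1 ≤ lam i) : i = j := by
  rcases lt_trichotomy i j with hlt | hlt | hlt
  · have := h i j hi hlt hjd; omega
  · exact hlt
  · have := h j i hj hlt hid; omega

theorem Gr.inv_inc {d N : ℕ} {lam : ℕ → ℕ} {w : Equiv.Perm ℤ} (h : Gr d N lam w) {x y : ℤ}
    (hx : 0 < w⁻¹ x) (hxy : w⁻¹ x < w⁻¹ y) : x < y := by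
  have := h.inc _ _ hx hxy
  simpa using this

theorem grA {d N : ℕ} {lam : ℕ → ℕ} {w : Equiv.Perm ℤ} (hws : WS d lam) (h : Gr d N lam w) {j : ℕ}
    (hj : LD j w) : ∃ i, Rem d lam i ∧ lam i = j + 1 := by
  have hod := inv_odd h.sg.1
  have hne : w⁻¹ ((j : ℤ) + 1) ≠ 0 := odd_ne hod (by omega)
  have hneg : w⁻¹ ((j : ℤ) + 1) < 0 := by
    by_contra hc
    unfold LD yv at hj
    split_ifs at hj with h0
    · subst h0
      rw [hod] at hj
      simp at hj hc hne
      omega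
    · have := h.inv_inc (by omega) hj
      omega
  obtain ⟨i, h1, h2, h3⟩ := (h.neg _ (by omega)).1 hneg
  refine ⟨i, ⟨h1, h2, by omega, ?_⟩, by omega⟩
  have key : ∀ t, 1 ≤ t → t ≤ d → lam t = j → j = 0 := by
    intro t t1 t2 t3
    by_contra hj0
    have n1 := (h.neg j (by omega)).2 ⟨t, t1, t2, by omega⟩
    unfold LD yv at hj
    rw [if_neg hj0] at hj
    have := h.inc (- w⁻¹ (j : ℤ)) (- w⁻¹ ((j : ℤ) + 1)) (by omega) (by omega)
    rw [h.sg.1, h.sg.1] at this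
    simp at this
  intro a b ha hab hb
  have w1 := hws a b ha hab hb
  unfold dec
  split_ifs with c1 c2 c2
  · omega
  · subst c1; omega
  · subst c2
    have := key b (by omega) hb
    omega
  · exact w1

theorem gr_pos {d N : ℕ} {lam : ℕ → ℕ} {w : Equiv.Perm ℤ} (hws : WS d lam) (h : Gr d N lam w) {i j : ℕ}
    (hi : Rem d lam i) (hj : lam i = j + 1) : 0 < w⁻¹ (yv j) ∧ w⁻¹ ((j : ℤ) + 1) < 0 := by
  have hod := inv_odd h.sg.1
  obtain ⟨h1, h2, h3, h4⟩ := hi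
  have n1 := (h.neg ((j : ℤ) + 1) (by omega)).2 ⟨i, h1, h2, by omega⟩
  refine ⟨?_, n1⟩
  unfold yv
  split_ifs with h0
  · subst h0
    rw [hod]
    norm_num only [Nat.cast_zero, zero_add] at n1
    omega
  · have hne : w⁻¹ (j : ℤ) ≠ 0 := odd_ne hod (by omega)
    by_contra hc
    obtain ⟨t, t1, t2, t3⟩ := (h.neg (j : ℤ) (by omega)).1 (by omega)
    rcases lt_trichotomy i t with hlt | hlt | hlt
    · have := h4 i t h1 hlt t2
      simp only [dec, if_true] at this
      rw [if_neg (by omega)] at this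
      omega
    · subst hlt; omega
    · have := hws t i t1 hlt h2
      omega

theorem grB {d N : ℕ} {lam : ℕ → ℕ} {w : Equiv.Perm ℤ} (hws : WS d lam) (h : Gr d N lam w) {i j : ℕ}
    (hi : Rem d lam i) (hj : lam i = j + 1) : LD j w := by
  obtain ⟨a, b⟩ := gr_pos hws h hi hj
  unfold LD
  omega

theorem grC {d N : ℕ} {lam : ℕ → ℕ} {w : Equiv.Perm ℤ} (hws : WS d lam) (h : Gr d N lam w) {i j : ℕ}
    (hi : Rem d lam i) (hj : lam i = j + 1) : Gr d N (dec lam i) (sB j * w) := by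
  have hod := inv_odd h.sg.1
  have hLD := grB hws h hi hj
  obtain ⟨p1, p2⟩ := gr_pos hws h hi hj
  obtain ⟨h1, h2, h3, h4⟩ := hi
  refine ⟨signed_mul (signed_sB (LD_lt h.sg hLD)) h.sg, ?_, ?_⟩
  · intro a b ha hab
    by_contra hc
    rw [Equiv.Perm.mul_apply, Equiv.Perm.mul_apply, not_lt] at hc
    rcases sB_rev j (odd_ne h.sg.1 (by omega)) (odd_ne h.sg.1 (by omega)) (h.inc a b ha hab) hc with
      ⟨e1, e2⟩ | ⟨e1, e2⟩
    · rw [← e2] at p2; simp at p2; omega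
    · rw [← neg_neg (yv j), ← e2, hod] at p1; simp at p1; omega
  · intro x hx
    rw [mul_inv_rev, sB_inv, Equiv.Perm.mul_apply]
    by_cases x1 : x = (j : ℤ) + 1
    · have : sB j x = yv j := by
        rw [x1, sB_apply]; have := yv_lt j; split_ifs <;> omega
      rw [this]
      constructor
      · intro h; omega
      · rintro ⟨t, t1, t2, t3⟩
        exfalso
        unfold dec at t3
        split_ifs at t3 with c
        · omega
        · exact c (WS_inj hws t1 h1 t2 h2 (by omega) (by omega))
    by_cases x2 : x = j
    · have : sB j x = (j : ℤ) + 1 := by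
        rw [x2, sB_apply]; unfold yv; split_ifs <;> omega
      rw [this]
      refine ⟨fun _ => ⟨i, h1, h2, by simp only [dec, if_true]; omega⟩, fun _ => p2⟩
    · have : sB j x = x := by
        rw [sB_apply]; unfold yv; split_ifs <;> omega
      rw [this, h.neg x hx]
      constructor
      · rintro ⟨t, t1, t2, t3⟩
        refine ⟨t, t1, t2, ?_⟩
        unfold dec
        rw [if_neg]
        · exact t3
        · rintro rfl; omega
      · rintro ⟨t, t1, t2, t3⟩
        refine ⟨t, t1, t2, ?_⟩
        unfold dec at t3
        split_ifs at t3 with c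
        · omega
        · exact t3

theorem size_zero {d : ℕ} {lam : ℕ → ℕ} : sizeP d lam = 0 ↔ ∀ i, 1 ≤ i → i ≤ d → lam i = 0 := by
  unfold sizeP
  rw [Finset.sum_eq_zero_iff]
  simp only [Finset.mem_Icc]
  exact ⟨fun h i a b => h i ⟨a, b⟩, fun h i a => h i a.1 a.2⟩

theorem inc_ge (u : ℤ → ℤ) (h0 : ∀ x, 0 < x → 0 < u x) (hi : ∀ a b, 0 < a → a < b → u a < u b)
    (n : ℕ) : ((n : ℤ) + 1) ≤ u ((n : ℤ) + 1) := by
  induction n with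
  | zero => have := h0 1 (by omega); simp; omega
  | succ n ih =>
    have := hi ((n : ℤ) + 1) (((n + 1 : ℕ) : ℤ) + 1) (by omega) (by omega)
    push_cast at *
    omega

theorem gr_one {d N : ℕ} {lam : ℕ → ℕ} {w : Equiv.Perm ℤ} (h : Gr d N lam w)
    (h0 : sizeP d lam = 0) : w = 1 := by
  rw [size_zero] at h0
  have ip : ∀ x, 0 < x → 0 < w⁻¹ x := by
    intro x hx
    have : w⁻¹ x ≠ 0 := odd_ne (inv_odd h.sg.1) (by omega)
    have h1 : ¬ w⁻¹ x < 0 := by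
      rw [h.neg x hx]
      rintro ⟨i, a, b, c⟩
      have := h0 i a b
      omega
    omega
  have wp : ∀ x, 0 < x → 0 < w x := by
    intro x hx
    by_contra hc
    have : w x ≠ 0 := odd_ne h.sg.1 (by omega)
    have := ip (- w x) (by omega)
    rw [inv_odd h.sg.1] at this
    simp at this
    omega
  have ii : ∀ a b, 0 < a → a < b → w⁻¹ a < w⁻¹ b := by
    intro a b ha hab
    by_contra hc
    have hne : w⁻¹ a ≠ w⁻¹ b := fun h => hab.ne (w⁻¹.injective h)
    have := h.inv_inc (ip b (by omega)) (by omega : w⁻¹ b < w⁻¹ a)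
    omega
  have hpos : ∀ x, 0 < x → w x = x := by
    intro x hx
    have a1 := inc_ge w wp h.inc (x - 1).toNat
    have e : ((x - 1).toNat : ℤ) + 1 = x := by omega
    rw [e] at a1
    have a2 := inc_ge (w⁻¹ : Equiv.Perm ℤ) ip ii (w x - 1).toNat
    have := wp x hx
    have e : ((w x - 1).toNat : ℤ) + 1 = w x := by omega
    rw [e] at a2
    simp at a2
    omega
  ext x
  rw [Equiv.Perm.one_apply]
  rcases lt_trichotomy x 0 with hx | hx | hx
  · have := hpos (-x) (by omega)
    rw [h.sg.1] at this
    omega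
  · rw [hx, odd_zero h.sg.1]
  · exact hpos x hx

theorem gr_len {d N : ℕ} (m : ℕ) : ∀ (lam : ℕ → ℕ) (w : Equiv.Perm ℤ), WS d lam → Gr d N lam w →
    F N m w ≠ 0 → m = sizeP d lam := by
  induction m with
  | zero =>
    intro lam w _ h hF
    symm
    rw [size_zero]
    have hw : w = 1 := by
      by_contra hc; apply hF; simp [F, hc]
    intro i h1 h2
    by_contra hc
    have := (h.neg (lam i) (by omega)).2 ⟨i, h1, h2, rfl⟩
    rw [hw] at this
    simp at this
    omega
  | succ m ih =>
    intro lam w hws h hF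
    rw [F] at hF
    obtain ⟨j, _, hj⟩ := Finset.exists_ne_zero_of_sum_ne_zero hF
    split_ifs at hj with hLD
    · obtain ⟨i, hi, hij⟩ := grA hws h hLD
      have := ih _ _ hi.2.2.2 (grC hws h hi hij) hj
      rw [sizeP_dec hi.1 hi.2.1 hi.2.2.1, this]
    · exact absurd rfl hj

theorem gr_card {d N : ℕ} (m : ℕ) : ∀ (lam : ℕ → ℕ) (w : Equiv.Perm ℤ), WS d lam → Gr d N lam w →
    sizeP d lam = m →
    Finite {B // IsSYT d lam B} ∧ Nat.card {B // IsSYT d lam B} = F N m w := by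
  classical
  induction m with
  | zero =>
    intro lam w hws h h0
    have hD : ∀ p, p ∉ Diagram d lam := by
      intro p hp
      rw [mem_Diagram] at hp
      obtain ⟨i, h1, h2, h3, h4, h5⟩ := hp
      have := size_zero.1 h0 i h1 h2
      omega
    have hE : Diagram d lam = ∅ := Set.eq_empty_iff_forall_notMem.2 hD
    have hB : IsSYT d lam (fun _ => 0) := by
      refine ⟨⟨?_, fun _ _ => rfl⟩, fun p hp => absurd hp (hD p)⟩
      rw [hE, h0]
      simp
    have : Unique {B // IsSYT d lam B} :=
      { default := ⟨_, hB⟩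
        uniq := fun B => Subtype.ext (funext fun p => B.2.1.2 p (hD p)) }
    refine ⟨inferInstance, ?_⟩
    rw [Nat.card_unique]
    simp [F, gr_one h h0]
  | succ m ih =>
    intro lam w hws h hm
    have hsz : ∀ i, Rem d lam i → sizeP d (dec lam i) = m := by
      intro i hi
      have := sizeP_dec hi.1 hi.2.1 hi.2.2.1
      omega
    have hl : ∀ i, Rem d lam i → lam i = (lam i - 1) + 1 := by
      intro i hi; have := hi.2.2.1; omega
    have hrec := fun i (hi : Rem d lam i) =>
      ih (dec lam i) _ hi.2.2.2 (grC hws h hi (hl i hi)) (hsz i hi)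
    obtain ⟨f1, f2⟩ := SYT_rec hws (by omega) (fun i hi => (hrec i hi).1)
    refine ⟨f1, ?_⟩
    rw [f2, F, ← Finset.sum_filter]
    refine Finset.sum_bij (fun i _ => lam i - 1) ?_ ?_ ?_ ?_
    · intro i hi
      have hi := (Finset.mem_filter.1 hi).2
      have := grB hws h hi (hl i hi)
      exact Finset.mem_filter.2 ⟨Finset.mem_range.2 (LD_lt h.sg this), this⟩
    · intro i hi j hj e
      have hi := (Finset.mem_filter.1 hi).2
      have hj := (Finset.mem_filter.1 hj).2
      have := hl i hi
      have := hl j hj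
      exact WS_inj hws hi.1 hj.1 hi.2.1 hj.2.1 (by omega) hi.2.2.1
    · intro j hj
      obtain ⟨i, hi, hij⟩ := grA hws h (Finset.mem_filter.1 hj).2
      exact ⟨i, Finset.mem_filter.2 ⟨Finset.mem_Icc.2 ⟨hi.1, hi.2.1⟩, hi⟩, by omega⟩
    · intro i hi
      exact (hrec i (Finset.mem_filter.1 hi).2).2

theorem main_thm (d r : ℕ) (hd : 1 ≤ d)
    (w : Equiv.Perm ℤ) (hw : IsWdr d r w) :
    Nat.card {L : List ℕ // IsReducedWord (d + r) w L} =
      Nat.card {B : ℤ × ℤ → ℕ // IsSYT d (Zlam d r) B} := by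
  obtain ⟨w', H, E⟩ := path d r hd w hw
  have hws : WS d (Zlam d r) := by
    intro i j h1 h2 h3
    unfold Zlam; omega
  have hp : ∀ c : ℤ, 0 < c → ((c ≤ d ∧ w' c = -((r : ℤ) + 2 * (d - c) + 1)) ∨ ((d : ℤ) < c ∧ 0 < w' c)) := by
    intro c hc
    have a := H.ng c hc
    have b := H.ps c hc
    split_ifs at a b <;> omega
  have hG : Gr d (r + 3 * d + 10 + 1) (Zlam d r) w' := by
    refine ⟨signed_mono (Nat.le_succ _) H.sg, ?_, ?_⟩
    · intro a b ha hab
      have h1 := hp a ha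
      have h2 := hp b (by omega)
      have h3 := H.inc a b ha hab
      omega
    · intro x hx
      constructor
      · intro hneg
        have e : w' (- w'⁻¹ x) = -x := by rw [H.sg.1]; simp
        have h1 := hp (- w'⁻¹ x) (by omega)
        refine ⟨(- w'⁻¹ x).toNat, by omega, by omega, ?_⟩
        unfold Zlam
        omega
      · rintro ⟨i, h1, h2, h3⟩
        unfold Zlam at h3
        have h4 := hp i (by omega)
        have h5 : w' (-(i : ℤ)) = x := by rw [H.sg.1]; omega
        rw [← h5]
        simp
        omega
  obtain ⟨_, hc⟩ := gr_card _ _ _ hws hG rfl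
  rw [red_card, hc]
  have hwin : ∀ m, F (d + r) m w = F (r + 3 * d + 10 + 1) m w' := by
    intro m
    rw [F_window (d + r) (r + 3 * d + 10 + 1) m (by omega) w hw.1, E]
  rw [hwin]
  by_cases h1 : F (r + 3 * d + 10 + 1) (lengthB (d + r) w) w' = 0
  · rw [h1]
    by_contra h2
    have h3 := F_length (d + r) (sizeP d (Zlam d r)) w (by rw [hwin]; exact fun h => h2 h.symm)
    rw [h3] at h1
    exact h2 h1.symm
  · rw [← gr_len _ _ _ hws hG h1]

/-- `|Red(w^{(d,r)})| = |SYT(Z(d,r))|`. -/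
theorem red_card_eq_syt_card (d r : ℕ) (hd : 1 ≤ d)
    (w : Equiv.Perm ℤ) (hw : IsWdr d r w) :
    Nat.card {L : List ℕ // IsReducedWord (d + r) w L} =
      Nat.card {B : ℤ × ℤ → ℕ // IsSYT d (Zlam d r) B} := by
  exact main_thm d r hd w hw

end BST
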